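/- Let (Ω,Σ,μ) be a probability space and X a Banach space. Then X has property (δS_μ) if and only if every uniformly bounded relatively weakly compact subset of L¹(μ,X) is a δS-set. -/

import Mathlib

open MeasureTheory Filter Set ENNReal Pointwise

noncomputable section

def IsWeaklyCompact {X : Type*} [NormedAddCommGroup X] [NormedSpace ℝ X] (W : Set X) : Prop :=
  IsCompact (toWeakSpace ℝ X '' W)

def IsRelWeaklyCompact {X : Type*} [NormedAddCommGroup X] [NormedSpace ℝ X] (W : Set X) : Prop :=
  IsCompact (closure (toWeakSpace ℝ X '' W))

variable {Ω : Type*} [MeasurableSpace Ω] {X : Type*} [NormedAddCommGroup X] [NormedSpace ℝ X]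

/-- A set of functions in `L¹(μ,X)` is uniformly integrable if it is bounded and the integrals
of the norms over small sets are uniformly small. -/
def UnifIntegrableSet (μ : Measure Ω) (K : Set (Lp X 1 μ)) : Prop :=
  (∃ C : ℝ, ∀ f ∈ K, ‖f‖ ≤ C) ∧
  ∀ ε : ℝ, 0 < ε → ∃ δ : ℝ, 0 < δ ∧ ∀ f ∈ K, ∀ A : Set Ω, μ A ≤ ENNReal.ofReal δ →
    ∫ ω in A, ‖(f : Ω → X) ω‖ ∂μ ≤ ε

/-- `K ⊆ L¹(μ,X)` is a δS-set if it is uniformly integrable and for every `δ > 0` there is a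
weakly compact `W ⊆ X` with `μ (f ⁻¹' W) ≥ 1 - δ` for all `f ∈ K`. -/
def IsDeltaSSet (μ : Measure Ω) (K : Set (Lp X 1 μ)) : Prop :=
  UnifIntegrableSet μ K ∧
  ∀ δ : ℝ, 0 < δ → ∃ W : Set X, IsWeaklyCompact W ∧
    ∀ f ∈ K, 1 - ENNReal.ofReal δ ≤ μ ((f : Ω → X) ⁻¹' W)

/-- A Banach space `X` has property (δSμ) if every relatively weakly compact subset of
`L¹(μ,X)` is a δS-set. -/
def DeltaSProp (μ : Measure Ω) (X : Type*) [NormedAddCommGroup X] [NormedSpace ℝ X] : Prop :=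
  ∀ K : Set (Lp X 1 μ), IsRelWeaklyCompact K → IsDeltaSSet μ K

open Topology

/-- Weak convergence of a family along a filter, tested on functionals. -/
def WTendsto {ι E : Type*} [NormedAddCommGroup E] [NormedSpace ℝ E]
    (u : ι → E) (l : Filter ι) (x : E) : Prop :=
  ∀ φ : StrongDual ℝ E, Tendsto (fun i => φ (u i)) l (𝓝 (φ x))

theorem exists_functional_of_bound {ι E : Type*} [NormedAddCommGroup E] [NormedSpace ℝ E]
    (u : ι → E) (c : ι → ℝ) (M : ℝ) (hM : 0 ≤ M)
    (h : ∀ a : ι →₀ ℝ, |a.sum fun i r => r * c i| ≤ M * ‖a.sum fun i r => r • u i‖) :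
    ∃ Φ : StrongDual ℝ E, ‖Φ‖ ≤ M ∧ ∀ i, Φ (u i) = c i := by
  classical
  set T : (ι →₀ ℝ) →ₗ[ℝ] E := Finsupp.linearCombination ℝ u with hT
  set S : (ι →₀ ℝ) →ₗ[ℝ] ℝ := Finsupp.linearCombination ℝ c with hS
  have hb : ∀ a, |S a| ≤ M * ‖T a‖ := fun a => by
    simpa [hT, hS, Finsupp.linearCombination_apply] using h a
  have hker : LinearMap.ker T ≤ LinearMap.ker S := fun a ha => by
    have := hb a
    rw [LinearMap.mem_ker] at ha ⊢
    rw [ha] at this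
    simpa using this
  set g : LinearMap.range T →ₗ[ℝ] ℝ :=
    ((LinearMap.ker T).liftQ S hker).comp T.quotKerEquivRange.symm.toLinearMap with hg
  have hgT : ∀ a, g ⟨T a, a, rfl⟩ = S a := fun a => by
    have : T.quotKerEquivRange.symm ⟨T a, a, rfl⟩ = (LinearMap.ker T).mkQ a := by
      rw [LinearEquiv.symm_apply_eq]
      rfl
    simp [hg, this]
  have hgb : ∀ y, ‖g y‖ ≤ M * ‖y‖ := by
    rintro ⟨_, a, rfl⟩
    rw [hgT]
    exact hb a
  obtain ⟨Φ, h1, h2⟩ := exists_extension_norm_eq (𝕜 := ℝ) _ (g.mkContinuous M hgb)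
  refine ⟨Φ, ?_, fun i => ?_⟩
  · rw [h2]
    exact LinearMap.mkContinuous_norm_le _ hM _
  · have := h1 ⟨T (Finsupp.single i 1), _, rfl⟩
    rw [LinearMap.mkContinuous_apply, hgT] at this
    simpa [hT, hS] using this

/-- If the linear combinations of `v` are dominated in norm by those of a weakly null family `u`,
then `v` is weakly null. -/
theorem WTendsto.of_norm_sum_le {ι E F : Type*} [NormedAddCommGroup E] [NormedSpace ℝ E]
    [NormedAddCommGroup F] [NormedSpace ℝ F] {u : ι → E} {v : ι → F} {l : Filter ι}
    (hu : WTendsto u l 0)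
    (h : ∀ a : ι →₀ ℝ, ‖a.sum fun i r => r • v i‖ ≤ ‖a.sum fun i r => r • u i‖) :
    WTendsto v l 0 := by
  intro φ
  obtain ⟨Φ, -, hΦ⟩ := exists_functional_of_bound u (fun i => φ (v i)) ‖φ‖ (norm_nonneg _)
    (fun a => by
      have : (a.sum fun i r => r * φ (v i)) = φ (a.sum fun i r => r • v i) := by
        simp [Finsupp.sum, map_sum]
      rw [this]
      exact (φ.le_opNorm _).trans (mul_le_mul_of_nonneg_left (h a) (norm_nonneg _)))
  have := hu Φ
  simpa [hΦ] using this

theorem hilbert_ultrafilter_weak_limit {H : Type*} [NormedAddCommGroup H] [InnerProductSpace ℝ H]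
    [CompleteSpace H] {ι : Type*} (v : ι → H) (C : ℝ) (hv : ∀ i, ‖v i‖ ≤ C) (U : Ultrafilter ι) :
    ∃ w : H, ∀ h : H, Tendsto (fun i => inner ℝ (v i) h) U (𝓝 (inner ℝ w h)) := by
  have hlim : ∀ h : H, ∃ r, Tendsto (fun i => inner ℝ (v i) h) U (𝓝 r) := by
    intro h
    have hc : IsCompact (Icc (-(C * ‖h‖)) (C * ‖h‖)) := isCompact_Icc
    have := hc.ultrafilter_le_nhds (U.map fun i => inner ℝ (v i) h) (by
      rw [le_principal_iff, Ultrafilter.mem_coe, Ultrafilter.mem_map]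
      filter_upwards with i
      exact abs_le.1 ((abs_real_inner_le_norm _ _).trans
        (mul_le_mul_of_nonneg_right (hv i) (norm_nonneg _))))
    obtain ⟨r, -, hr⟩ := this
    exact ⟨r, hr⟩
  choose L hL using hlim
  let Lm : H →ₗ[ℝ] ℝ :=
    { toFun := L
      map_add' := fun x y => tendsto_nhds_unique (hL (x + y)) (by
        simpa [inner_add_right] using (hL x).add (hL y))
      map_smul' := fun r x => tendsto_nhds_unique (hL (r • x)) (by
        simpa [inner_smul_right] using (hL x).const_mul r) }
  have hb : ∀ h, ‖Lm h‖ ≤ C * ‖h‖ := fun h =>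
    le_of_tendsto (hL h).norm (Eventually.of_forall fun i => (abs_real_inner_le_norm _ _).trans
        (mul_le_mul_of_nonneg_right (hv i) (norm_nonneg _)))
  refine ⟨(InnerProductSpace.toDual ℝ H).symm (Lm.mkContinuous C hb), fun h => ?_⟩
  rw [InnerProductSpace.toDual_symm_apply]
  exact hL h

theorem wtendsto_iff {ι E : Type*} [NormedAddCommGroup E] [NormedSpace ℝ E]
    {u : ι → E} {l : Filter ι} {x : E} :
    WTendsto u l x ↔ Tendsto (fun i => toWeakSpace ℝ E (u i)) l (𝓝 (toWeakSpace ℝ E x)) := by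
  have hinj : Function.Injective (topDualPairing ℝ E).flip := by
    intro a b hab
    refine (SeparatingDual.eq_iff_forall_dual_eq (R := ℝ)).2 fun φ => ?_
    exact LinearMap.congr_fun hab φ
  exact (WeakBilin.tendsto_iff_forall_eval_tendsto _ hinj).symm

theorem continuous_weakSpace_eval {E : Type*} [NormedAddCommGroup E] [NormedSpace ℝ E]
    (φ : StrongDual ℝ E) : Continuous fun w : WeakSpace ℝ E => φ ((toWeakSpace ℝ E).symm w) :=
  WeakBilin.eval_continuous (topDualPairing ℝ E).flip φ

theorem WTendsto.map {ι E F : Type*} [NormedAddCommGroup E] [NormedSpace ℝ E]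
    [NormedAddCommGroup F] [NormedSpace ℝ F] {u : ι → E} {l : Filter ι} {x : E}
    (h : WTendsto u l x) (T : E →L[ℝ] F) : WTendsto (fun i => T (u i)) l (T x) :=
  fun φ => h (φ.comp T)

theorem IsRelWeaklyCompact.exists_norm_le {E : Type*} [NormedAddCommGroup E] [NormedSpace ℝ E]
    {K : Set E} (hK : IsRelWeaklyCompact K) : ∃ C : ℝ, ∀ x ∈ K, ‖x‖ ≤ C := by
  obtain ⟨C, hC⟩ := banach_steinhaus (𝕜 := ℝ) (𝕜₂ := ℝ) (σ₁₂ := RingHom.id ℝ)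
    (g := fun x : K => NormedSpace.inclusionInDoubleDual ℝ E x)
    (fun φ => by
      have hc := (hK.image (continuous_weakSpace_eval φ)).isBounded
      obtain ⟨C, hC⟩ := hc.exists_norm_le
      refine ⟨C, fun x => ?_⟩
      exact hC _ ⟨toWeakSpace ℝ E x, subset_closure ⟨x, x.2, rfl⟩, by simp⟩)
  refine ⟨C, fun x hx => ?_⟩
  have := hC ⟨x, hx⟩
  rwa [← (NormedSpace.inclusionInDoubleDualLi ℝ (E := E)).norm_map x]

theorem exists_functional_vanishing {E : Type*} [NormedAddCommGroup E] [NormedSpace ℝ E]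
    (M : Submodule ℝ E) (hM : IsClosed (M : Set E)) {z : E} (hz : z ∉ M) :
    ∃ φ : StrongDual ℝ E, (∀ m ∈ M, φ m = 0) ∧ φ z ≠ 0 := by
  have : IsClosed (M : Set E) := hM
  have hz' : (M.mkQ z) ≠ 0 := by simpa using hz
  obtain ⟨ψ, hψ⟩ := SeparatingDual.exists_ne_zero (R := ℝ) (V := E ⧸ M) hz'
  refine ⟨ψ.comp M.mkQL, fun m hm => ?_, hψ⟩
  have : M.mkQL m = 0 := by simpa using hm
  simp [this]

/-- A weak limit along a nontrivial filter of elements of a closed subspace lies in it. -/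
theorem WTendsto.mem_of_closed {ι E : Type*} [NormedAddCommGroup E] [NormedSpace ℝ E]
    {u : ι → E} {l : Filter ι} [l.NeBot] {x : E} (h : WTendsto u l x) (M : Submodule ℝ E)
    (hM : IsClosed (M : Set E)) (hu : ∀ i, u i ∈ M) : x ∈ M := by
  by_contra hx
  obtain ⟨φ, h0, h1⟩ := exists_functional_vanishing M hM hx
  refine h1 (tendsto_nhds_unique (h φ) ?_)
  simp [h0 _ (hu _)]

/-- A countable family of functionals separating the points of a separable closed subspace. -/
theorem exists_total_seq {E : Type*} [NormedAddCommGroup E] [NormedSpace ℝ E]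
    {M : Set E} (hM : TopologicalSpace.IsSeparable M) :
    ∃ x : ℕ → StrongDual ℝ E, (∀ k, ‖x k‖ ≤ 1) ∧ ∀ z ∈ M, (∀ k, x k z = 0) → z = 0 := by
  obtain ⟨c, hc, hMc⟩ := hM
  rcases c.eq_empty_or_nonempty with rfl | hne
  · refine ⟨0, by simp, fun z hz => ?_⟩
    simpa using hMc hz
  obtain ⟨d, hd⟩ := hc.exists_eq_range hne
  choose x hx using fun k => exists_dual_vector'' ℝ (d k)
  refine ⟨x, fun k => (hx k).1, fun z hz h0 => ?_⟩
  rw [← norm_eq_zero]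
  refine le_antisymm (le_of_forall_pos_le_add fun ε hε => ?_) (norm_nonneg _)
  have hz' := hMc hz
  rw [hd, Metric.mem_closure_range_iff] at hz'
  obtain ⟨k, hk⟩ := hz' (ε / 2) (half_pos hε)
  rw [dist_eq_norm] at hk
  have h1 : ‖d k‖ ≤ ε / 2 := by
    have h2 : ‖d k‖ = x k (d k - z) := by
      rw [map_sub, h0 k, sub_zero]; simpa using (hx k).2.symm
    rw [h2]
    refine (le_abs_self _).trans (((x k).le_opNorm _).trans ?_)
    rw [norm_sub_rev]
    nlinarith [norm_nonneg (x k), (hx k).1, norm_nonneg (z - d k)]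
  have := norm_le_norm_add_norm_sub' z (d k)
  linarith

theorem clusterPt_map_eq {E : Type*} [NormedAddCommGroup E] [NormedSpace ℝ E] {ι : Type*}
    {u : ι → E} {l : Filter ι} {w : WeakSpace ℝ E} (φ : StrongDual ℝ E) {c : ℝ}
    (hw : MapClusterPt w l fun i => toWeakSpace ℝ E (u i))
    (hc : Tendsto (fun i => φ (u i)) l (𝓝 c)) : φ ((toWeakSpace ℝ E).symm w) = c := by
  have h1 := hw.continuousAt_comp (f := fun w => φ ((toWeakSpace ℝ E).symm w))
    (continuous_weakSpace_eval φ).continuousAt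
  have h2 : ClusterPt (φ ((toWeakSpace ℝ E).symm w)) (map (fun i => φ (u i)) l) := h1
  have := h2.neBot
  by_contra hne
  have h3 : Disjoint (𝓝 (φ ((toWeakSpace ℝ E).symm w))) (𝓝 c) := disjoint_nhds_nhds.2 hne
  exact h2.neBot.ne ((h3.mono_right hc).eq_bot)

theorem IsRelWeaklyCompact.exists_subseq {E : Type*} [NormedAddCommGroup E] [NormedSpace ℝ E]
    {K : Set E} (hK : IsRelWeaklyCompact K) (f : ℕ → E) (hf : ∀ n, f n ∈ K) :
    ∃ (x : E) (ψ : ℕ → ℕ), StrictMono ψ ∧ WTendsto (fun n => f (ψ n)) atTop x := by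
  obtain ⟨C, hC⟩ := hK.exists_norm_le
  set M : Submodule ℝ E := (Submodule.span ℝ (range f)).topologicalClosure with hM
  have hMc : IsClosed (M : Set E) := Submodule.isClosed_topologicalClosure _
  have hMs : TopologicalSpace.IsSeparable (M : Set E) := by
    rw [hM, Submodule.topologicalClosure_coe]
    exact ((countable_range f).isSeparable.span).closure
  have hfM : ∀ n, f n ∈ M := fun n =>
    Submodule.le_topologicalClosure _ (Submodule.subset_span ⟨n, rfl⟩)
  obtain ⟨x, hx1, hx⟩ := exists_total_seq hMs
  obtain ⟨c, -, ψ, hψ, hlim⟩ := (isCompact_univ_pi fun _ : ℕ => isCompact_Icc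
    (a := -C) (b := C)).tendsto_subseq (x := fun n k => x k (f n)) (fun n k _ => by
      refine abs_le.1 (((x k).le_opNorm _).trans ?_)
      nlinarith [hx1 k, norm_nonneg (x k), norm_nonneg (f n), hC _ (hf n)])
  rw [tendsto_pi_nhds] at hlim
  have hcl : ∀ w : WeakSpace ℝ E,
      MapClusterPt w atTop (fun n => toWeakSpace ℝ E (f (ψ n))) →
      (toWeakSpace ℝ E).symm w ∈ M ∧ ∀ k, x k ((toWeakSpace ℝ E).symm w) = c k := by
    intro w hw
    refine ⟨?_, fun k => clusterPt_map_eq _ hw (hlim k)⟩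
    by_contra hz
    obtain ⟨φ, h0, h1⟩ := exists_functional_vanishing M hMc hz
    refine h1 (clusterPt_map_eq φ hw ?_)
    simp [h0 _ (hfM _)]
  have hle : map (fun n => toWeakSpace ℝ E (f (ψ n))) atTop ≤
      𝓟 (closure (toWeakSpace ℝ E '' K)) := by
    rw [le_principal_iff, mem_map]
    exact Eventually.of_forall fun n => subset_closure ⟨_, hf _, rfl⟩
  obtain ⟨w, -, hw⟩ := hK hle
  refine ⟨(toWeakSpace ℝ E).symm w, ψ, hψ, ?_⟩
  rw [wtendsto_iff, LinearEquiv.apply_symm_apply]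
  refine hK.le_nhds_of_unique_clusterPt (le_principal_iff.1 hle) fun w' _ hw' => ?_
  obtain ⟨a1, a2⟩ := hcl w hw
  obtain ⟨b1, b2⟩ := hcl w' hw'
  have := hx _ (M.sub_mem b1 a1) fun k => by rw [map_sub, a2, b2, sub_self]
  exact (toWeakSpace ℝ E).symm.injective (sub_eq_zero.1 this)

/-- The span of a finite set is normed up to a factor `2` by finitely many members of a norming
family of functionals. -/
theorem exists_finset_norming {ι D : Type*} [NormedAddCommGroup D] [NormedSpace ℝ D]
    (p : ι → D →L[ℝ] ℝ) (hp : ∀ g : D, ∀ r < ‖g‖, ∃ i, r < |p i g|)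
    (B : Set D) (hB : B.Finite) :
    ∃ S : Finset ι, ∀ g ∈ Submodule.span ℝ B, ∀ r : ℝ, 0 ≤ r →
      (∀ i ∈ S, |p i g| ≤ r) → ‖g‖ ≤ 2 * r := by
  classical
  have : FiniteDimensional ℝ (Submodule.span ℝ B) := FiniteDimensional.span_of_finite ℝ hB
  have hc : IsCompact (Metric.sphere (0 : Submodule.span ℝ B) 1) := isCompact_sphere _ _
  obtain ⟨t, ht⟩ := hc.elim_finite_subcover
    (fun i => {g : Submodule.span ℝ B | 1 / 2 < |p i g|})
    (fun i => isOpen_lt continuous_const (by fun_prop)) (fun g hg => by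
      have hg' : ‖(g : D)‖ = 1 := mem_sphere_zero_iff_norm.1 hg
      obtain ⟨x, hx⟩ := hp g (1 / 2) (by rw [hg']; norm_num)
      exact mem_iUnion.2 ⟨x, hx⟩)
  refine ⟨t, fun g hg r hr hgr => ?_⟩
  by_cases h0 : g = 0
  · subst h0; simpa using hr
  have hn : 0 < ‖g‖ := norm_pos_iff.2 h0
  have hmem : ((‖g‖⁻¹ • (⟨g, hg⟩ : Submodule.span ℝ B)) : Submodule.span ℝ B) ∈
      Metric.sphere (0 : Submodule.span ℝ B) 1 := by
    rw [mem_sphere_zero_iff_norm]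
    change ‖‖g‖⁻¹ • g‖ = 1
    rw [norm_smul, norm_inv, norm_norm]
    exact inv_mul_cancel₀ hn.ne'
  obtain ⟨x, hx⟩ := mem_iUnion.1 (ht hmem)
  obtain ⟨hx, hgx⟩ := mem_iUnion.1 hx
  have h1 : 1 / 2 < ‖g‖⁻¹ * |p x g| := by
    have : 1 / 2 < |p x (‖g‖⁻¹ • g)| := hgx
    rwa [map_smul, smul_eq_mul, abs_mul, abs_of_pos (inv_pos.2 hn)] at this
  have h2 := hgr x hx
  rw [inv_mul_eq_div, lt_div_iff₀ hn] at h1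
  linarith

theorem eq_of_norming {ι D E : Type*} [NormedAddCommGroup D] [NormedSpace ℝ D]
    [NormedAddCommGroup E] [NormedSpace ℝ E] (J : E →L[ℝ] D) (hJ : ∀ y, ‖J y‖ ≤ ‖y‖)
    (p : ι → D →L[ℝ] ℝ) (hp : ∀ i y, |p i (J y)| ≤ ‖y‖) (F : D) (x : E) (a : ℕ → E)
    (T : ℕ → Finset E) (hT : Monotone T) (ha : ∀ n, a n ∈ T (n + 1)) (S : ℕ → Finset ι)
    (hS : ∀ m, ∀ g ∈ Submodule.span ℝ (insert F (J '' (T m : Set E))), ∀ r : ℝ, 0 ≤ r →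
      (∀ i ∈ S m, |p i g| ≤ r) → ‖g‖ ≤ 2 * r)
    (hF : ∀ m, ∀ i ∈ S m, p i F = p i (J x))
    (hx : x ∈ (Submodule.span ℝ (range a)).topologicalClosure) : F = J x := by
  have hspan : ∀ y ∈ Submodule.span ℝ (range a),
      ∃ m, J y ∈ Submodule.span ℝ (insert F (J '' (T m : Set E))) := by
    have hVm : Monotone fun m => Submodule.span ℝ (insert F (J '' (T m : Set E))) :=
      fun i j hij => Submodule.span_mono
        (insert_subset_insert (image_mono (Finset.coe_subset.2 (hT hij))))
    intro y hy
    induction hy using Submodule.span_induction with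
    | mem y hy =>
      obtain ⟨n, rfl⟩ := hy
      exact ⟨n + 1, Submodule.subset_span (Or.inr ⟨_, ha n, rfl⟩)⟩
    | zero => exact ⟨0, by simp⟩
    | add y z _ _ h1 h2 =>
      obtain ⟨m, hm⟩ := h1
      obtain ⟨k, hk⟩ := h2
      exact ⟨max m k, by
        rw [map_add]
        exact Submodule.add_mem _ (hVm (le_max_left m k) hm) (hVm (le_max_right m k) hk)⟩
    | smul r y _ h1 =>
      obtain ⟨m, hm⟩ := h1
      exact ⟨m, by rw [map_smul]; exact Submodule.smul_mem _ _ hm⟩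
  rw [← sub_eq_zero, ← norm_le_zero_iff]
  refine le_of_forall_pos_le_add fun ε hε => ?_
  obtain ⟨y, hy, hxy⟩ : ∃ y ∈ Submodule.span ℝ (range a), dist x y < ε / 3 := by
    rw [← SetLike.mem_coe, Submodule.topologicalClosure_coe] at hx
    exact Metric.mem_closure_iff.1 hx _ (by positivity)
  obtain ⟨m, hm⟩ := hspan y hy
  have h1 := hS m (F - J y) (Submodule.sub_mem _ (Submodule.subset_span (Set.mem_insert _ _)) hm)
    (dist x y) dist_nonneg fun i hi => by
      rw [map_sub, hF m i hi, ← map_sub, ← map_sub, dist_eq_norm]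
      exact hp i _
  have h3 : ‖J y - J x‖ ≤ dist x y := by
    rw [← map_sub, dist_comm, dist_eq_norm]
    exact hJ _
  have h4 : F - J x = (F - J y) + (J y - J x) := by abel
  rw [h4]
  have := norm_add_le (F - J y) (J y - J x)
  linarith

theorem exists_double_dual.{u} (E : Type u) [NormedAddCommGroup E] [NormedSpace ℝ E] :
    ∃ (D : Type u) (_ : NormedAddCommGroup D) (_ : NormedSpace ℝ D) (J : E →L[ℝ] D)
      (p : StrongDual ℝ E → D →L[ℝ] ℝ), (∀ y, ‖J y‖ ≤ ‖y‖) ∧ (∀ φ y, p φ (J y) = φ y) ∧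
      (∀ g r, r < ‖g‖ → ∃ φ, ‖φ‖ < 1 ∧ r < |p φ g|) ∧
      ∀ F : WeakDual ℝ (StrongDual ℝ E), ∃ F' : D, ∀ φ, p φ F' = F φ :=
  ⟨StrongDual ℝ (StrongDual ℝ E), inferInstance, inferInstance,
    NormedSpace.inclusionInDoubleDual ℝ E,
    fun φ => NormedSpace.inclusionInDoubleDual ℝ (StrongDual ℝ E) φ,
    NormedSpace.double_dual_bound ℝ E, fun _ _ => rfl,
    fun g _ hr => ContinuousLinearMap.exists_lt_apply_of_lt_opNorm g hr,
    fun F => ⟨WeakDual.toStrongDual F, fun _ => rfl⟩⟩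

theorem isRelWeaklyCompact_of_seq {E : Type*} [NormedAddCommGroup E] [NormedSpace ℝ E]
    {A : Set E} (hb : ∃ C : ℝ, ∀ x ∈ A, ‖x‖ ≤ C)
    (hA : ∀ a : ℕ → E, (∀ n, a n ∈ A) → ∃ (x : E) (l : Filter ℕ), l.NeBot ∧ l ≤ atTop ∧
      WTendsto a l x) : IsRelWeaklyCompact A := by
  classical
  obtain ⟨C, hC⟩ := hb
  refine NormedSpace.isCompact_closure_of_isBounded ℝ _ _ ?_ ?_
  · rw [Set.preimage_image_eq _ (toWeakSpace ℝ E).injective]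
    exact isBounded_iff_forall_norm_le.2 ⟨C, hC⟩
  intro F hF
  have hpick : ∀ (S : Finset {φ : StrongDual ℝ E // ‖φ‖ < 1}) (ε : ℝ), 0 < ε →
      ∃ a ∈ A, ∀ φ ∈ S, |F φ.1 - φ.1 a| < ε := by
    intro S ε hε
    have hO : IsOpen {G : WeakDual ℝ (StrongDual ℝ E) | ∀ φ ∈ S, |F φ.1 - G φ.1| < ε} := by
      have : {G : WeakDual ℝ (StrongDual ℝ E) | ∀ φ ∈ S, |F φ.1 - G φ.1| < ε} =
          ⋂ φ ∈ S, {G | |F φ.1 - G φ.1| < ε} := by ext; simp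
      rw [this]
      refine isOpen_biInter_finset fun φ _ => isOpen_lt ?_ continuous_const
      exact (continuous_const.sub (WeakDual.eval_continuous φ.1)).abs
    obtain ⟨_, hG, _, ⟨a, ha, rfl⟩, rfl⟩ := mem_closure_iff.1 hF _ hO (by simpa using fun _ _ _ => hε)
    exact ⟨a, ha, hG⟩
  obtain ⟨D, _, _, J, p', hJ, hpJ', hp', hF'⟩ := exists_double_dual E
  obtain ⟨F', hF'⟩ := hF' F
  let p : {φ : StrongDual ℝ E // ‖φ‖ < 1} → D →L[ℝ] ℝ := fun φ => p' φ
  have hp : ∀ g : D, ∀ r < ‖g‖, ∃ i, r < |p i g| := fun g r hr => by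
    obtain ⟨x, hx⟩ := hp' g r hr
    exact ⟨⟨x, hx.1⟩, hx.2⟩
  choose Φ hΦ using fun T : Finset E => exists_finset_norming p hp
    (insert F' (J '' (T : Set E))) ((T.finite_toSet.image J).insert F')
  let Ψ : Finset E → Finset {φ : StrongDual ℝ E // ‖φ‖ < 1} := fun T => T.powerset.biUnion Φ
  choose pick hpA hpick' using fun (n : ℕ) (T : Finset E) =>
    hpick (Ψ T) (1 / ((n : ℝ) + 1)) Nat.one_div_pos_of_nat
  obtain ⟨T, hTs⟩ : ∃ T : ℕ → Finset E, ∀ n, T (n + 1) = insert (pick n (T n)) (T n) :=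
    ⟨fun n => Nat.rec ∅ (fun n t => insert (pick n t) t) n, fun n => rfl⟩
  obtain ⟨a, ha⟩ : ∃ a : ℕ → E, ∀ n, a n = pick n (T n) := ⟨_, fun n => rfl⟩
  have hTmono : Monotone T := monotone_nat_of_le_succ fun n => by
    rw [hTs]; exact Finset.subset_insert _ _
  obtain ⟨x, l, hl, hle, hx⟩ := hA a fun n => by rw [ha]; exact hpA _ _
  have hFx : ∀ m, ∀ φ ∈ Φ (T m), F φ.1 = φ.1 x := by
    intro m φ hφ
    refine tendsto_nhds_unique ?_ (hx φ)
    have h0 : Tendsto (fun n : ℕ => 1 / ((n : ℝ) + 1)) l (𝓝 0) :=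
      tendsto_one_div_add_atTop_nhds_zero_nat.mono_left hle
    rw [tendsto_iff_dist_tendsto_zero]
    refine squeeze_zero' (Eventually.of_forall fun _ => dist_nonneg) ?_ h0
    filter_upwards [hle (eventually_ge_atTop m)] with n hn
    rw [dist_comm, Real.dist_eq, ha]
    refine (hpick' n (T n) φ ?_).le
    exact Finset.mem_biUnion.2 ⟨T m, Finset.mem_powerset.2 (hTmono hn), hφ⟩
  have hxcl : x ∈ (Submodule.span ℝ (range a)).topologicalClosure :=
    hx.mem_of_closed _ (Submodule.isClosed_topologicalClosure _) fun n =>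
      Submodule.le_topologicalClosure _ (Submodule.subset_span ⟨n, rfl⟩)
  have hFJ : F' = J x := by
    have hpJ : ∀ φ y, |p φ (J y)| ≤ ‖y‖ := fun φ y => by
      rw [show p φ (J y) = φ.1 y from hpJ' _ _]
      refine (φ.1.le_opNorm y).trans ?_
      nlinarith [φ.2, norm_nonneg y]
    have haT : ∀ n, a n ∈ T (n + 1) := fun n => by
      rw [hTs, ha]; exact Finset.mem_insert_self _ _
    exact eq_of_norming J hJ p hpJ F' x a T hTmono haT (fun m => Φ (T m)) (fun m => hΦ (T m))
      (fun m φ hφ => by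
        rw [show p φ (J x) = φ.1 x from hpJ' _ _, ← hFx m φ hφ]
        exact hF' _) hxcl
  refine ⟨toWeakSpace ℝ E x, DFunLike.ext _ _ fun φ => ?_⟩
  rw [← hF' φ, hFJ, hpJ' φ x]
  rfl

theorem isRelWeaklyCompact_range {E : Type*} [NormedAddCommGroup E] [NormedSpace ℝ E]
    {u : ℕ → E} {x : E} (h : WTendsto u atTop x) : IsRelWeaklyCompact (range u) := by
  have := (wtendsto_iff.1 h).isCompact_insert_range
  refine this.closure_of_subset ?_
  rw [← range_comp]
  exact subset_insert _ _

theorem aestronglyMeasurable_eval {S Z : Type*} [MeasurableSpace S] {ν : Measure S}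
    [NormedAddCommGroup Z] [NormedSpace ℝ Z] [SecondCountableTopology Z]
    {φ : S → StrongDual ℝ Z} (hφ : ∀ z, Measurable fun s => φ s z) {f : S → Z}
    (hf : AEStronglyMeasurable f ν) : AEStronglyMeasurable (fun s => φ s (f s)) ν := by
  borelize Z
  have h1 : StronglyMeasurable (Function.uncurry fun (z : Z) (s : S) => φ s z) :=
    stronglyMeasurable_uncurry_of_continuous_of_stronglyMeasurable
      (fun s => (φ s).continuous) (fun z => (hφ z).stronglyMeasurable)
  refine ⟨fun s => φ s (hf.mk f s), ?_, ?_⟩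
  · exact h1.comp_measurable (hf.stronglyMeasurable_mk.measurable.prodMk measurable_id)
  · filter_upwards [hf.ae_eq_mk] with s hs
    rw [hs]

theorem integrable_eval {S Z : Type*} [MeasurableSpace S] {ν : Measure S}
    [NormedAddCommGroup Z] [NormedSpace ℝ Z] [SecondCountableTopology Z]
    {φ : S → StrongDual ℝ Z} (hφ : ∀ z, Measurable fun s => φ s z) {M : ℝ}
    (hM : ∀ s, ‖φ s‖ ≤ M) {f : S → Z} (hf : Integrable f ν) :
    Integrable (fun s => φ s (f s)) ν := by
  refine (hf.norm.const_mul M).mono' (aestronglyMeasurable_eval hφ hf.1) ?_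
  exact Eventually.of_forall fun s => (φ s).le_of_opNorm_le (hM s) _

/-- Riesz representation for the scalar parts of a functional on `L¹(ν,Z)`. -/
theorem exists_scalar_density {S Z : Type*} [MeasurableSpace S] (ν : Measure S)
    [IsProbabilityMeasure ν] [NormedAddCommGroup Z] [NormedSpace ℝ Z]
    (Φ : StrongDual ℝ (Lp Z 1 ν)) (z : Z) :
    ∃ d : S → ℝ, Measurable d ∧ Integrable d ν ∧ ∀ (A : Set S) (hA : MeasurableSet A),
      ∫ s in A, d s ∂ν = Φ (indicatorConstLp 1 hA (measure_ne_top ν A) z) := by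
  let T : Lp ℝ 1 ν →L[ℝ] ℝ :=
    Φ.comp (ContinuousLinearMap.compLpL 1 ν (ContinuousLinearMap.toSpanSingleton ℝ z))
  let I : Lp ℝ 2 ν →ₗ[ℝ] Lp ℝ 1 ν :=
    { toFun := fun h => ((Lp.memLp h).mono_exponent (p := 1) one_le_two).toLp h
      map_add' := fun f g => by
        rw [← MemLp.toLp_add]
        exact MemLp.toLp_congr _ _ (Lp.coeFn_add f g)
      map_smul' := fun c f => by
        rw [RingHom.id_apply, ← MemLp.toLp_const_smul]
        exact MemLp.toLp_congr _ _ (Lp.coeFn_smul c f) }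
  have hI : ∀ h, ‖I h‖ ≤ 1 * ‖h‖ := fun h => by
    rw [one_mul]
    change ‖((Lp.memLp h).mono_exponent (p := 1) one_le_two).toLp h‖ ≤ _
    rw [Lp.norm_toLp, Lp.norm_def]
    exact ENNReal.toReal_mono (Lp.eLpNorm_ne_top h)
      (eLpNorm_le_eLpNorm_of_exponent_le one_le_two (Lp.aestronglyMeasurable h))
  let L : StrongDual ℝ (Lp ℝ 2 ν) := T.comp (I.mkContinuous 1 hI)
  let w : Lp ℝ 2 ν := (InnerProductSpace.toDual ℝ _).symm L
  have hw : Integrable (w : S → ℝ) ν := (Lp.memLp w).integrable one_le_two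
  refine ⟨hw.1.mk _, hw.1.stronglyMeasurable_mk.measurable, hw.congr hw.1.ae_eq_mk,
    fun A hA => ?_⟩
  rw [← integral_congr_ae (ae_restrict_of_ae hw.1.ae_eq_mk),
    ← L2.inner_indicatorConstLp_one (𝕜 := ℝ) hA (measure_ne_top ν A) w, real_inner_comm,
    InnerProductSpace.toDual_symm_apply]
  change Φ (ContinuousLinearMap.compLpL 1 ν _ (I _)) = _
  congr 1
  refine Lp.ext ?_
  filter_upwards [ContinuousLinearMap.coeFn_compLpL (p := 1) (μ := ν)
    (ContinuousLinearMap.toSpanSingleton ℝ z)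
    (I (indicatorConstLp 2 hA (measure_ne_top ν A) (1 : ℝ))),
    MemLp.coeFn_toLp ((Lp.memLp (indicatorConstLp 2 hA (measure_ne_top ν A) (1 : ℝ))).mono_exponent
      (p := 1) one_le_two),
    indicatorConstLp_coeFn (p := 2) (hs := hA) (hμs := measure_ne_top ν A) (c := (1 : ℝ)),
    indicatorConstLp_coeFn (p := 1) (hs := hA) (hμs := measure_ne_top ν A) (c := z)]
    with s h1 h2 h3 h4
  rw [h1, h4]
  have : (I (indicatorConstLp 2 hA (measure_ne_top ν A) (1 : ℝ))) s = A.indicator (fun _ => 1) s :=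
    h2.trans h3
  rw [this]
  by_cases hs : s ∈ A <;> simp [hs]

theorem abs_le_of_setIntegral_bound {S : Type*} [MeasurableSpace S] {ν : Measure S}
    [IsProbabilityMeasure ν] {d : S → ℝ} (hd : Integrable d ν) {c : ℝ}
    (h : ∀ A, MeasurableSet A → |∫ s in A, d s ∂ν| ≤ c * ν.real A) : ∀ᵐ s ∂ν, |d s| ≤ c := by
  have h1 : d ≤ᵐ[ν] fun _ => c := by
    refine ae_le_of_forall_setIntegral_le hd (integrable_const c) fun A hA _ => ?_
    rw [setIntegral_const, smul_eq_mul, mul_comm]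
    exact (le_abs_self _).trans (h A hA)
  have h2 : (fun s => - d s) ≤ᵐ[ν] fun _ => c := by
    refine ae_le_of_forall_setIntegral_le hd.neg (integrable_const c) fun A hA _ => ?_
    rw [setIntegral_const, smul_eq_mul, mul_comm, integral_neg]
    exact (neg_le_abs _).trans (h A hA)
  filter_upwards [h1, h2] with s a b
  exact abs_le.2 ⟨by linarith, a⟩

theorem le_of_rat_combinations {ι : Type*} {F G : (ι → ℝ) → ℝ} (hF : Continuous F)
    (hG : Continuous G) (h : ∀ q : ι → ℚ, F (fun i => q i) ≤ G fun i => q i) (a : ι → ℝ) :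
    F a ≤ G a := by
  have hd : DenseRange (Pi.map fun (_ : ι) (r : ℚ) => (r : ℝ)) :=
    DenseRange.piMap fun _ => Rat.denseRange_cast
  have hc : IsClosed {a | F a ≤ G a} := isClosed_le hF hG
  exact hd.induction_on (p := fun a => F a ≤ G a) a hc h

theorem exists_norm_le_functional_of_rat {Z : Type*} [NormedAddCommGroup Z] [NormedSpace ℝ Z]
    (z : ℕ → Z) (c : ℕ → ℝ) (M : ℝ) (hM : 0 ≤ M)
    (h : ∀ q : ℕ →₀ ℚ, |q.sum fun i r => (r : ℝ) * c i| ≤ M * ‖q.sum fun i r => (r : ℝ) • z i‖) :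
    ∃ φ : StrongDual ℝ Z, ‖φ‖ ≤ M ∧ ∀ i, φ (z i) = c i := by
  classical
  refine exists_functional_of_bound z c M hM fun a => ?_
  have := le_of_rat_combinations (ι := ℕ) (F := fun b => |∑ i ∈ a.support, b i * c i|)
    (G := fun b => M * ‖∑ i ∈ a.support, b i • z i‖) (by fun_prop) (by fun_prop) (fun q => by
      have := h (Finsupp.onFinset a.support (fun i => if i ∈ a.support then q i else 0)
        (by intro i; aesop))
      rw [Finsupp.onFinset_sum _ (by simp), Finsupp.onFinset_sum _ (by simp)] at this
      have e1 : ∑ i ∈ a.support, ((if i ∈ a.support then q i else 0 : ℚ) : ℝ) * c i =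
          ∑ i ∈ a.support, (q i : ℝ) * c i :=
        Finset.sum_congr rfl fun i hi => by rw [if_pos hi]
      have e2 : ∑ i ∈ a.support, ((if i ∈ a.support then q i else 0 : ℚ) : ℝ) • z i =
          ∑ i ∈ a.support, (q i : ℝ) • z i :=
        Finset.sum_congr rfl fun i hi => by rw [if_pos hi]
      rw [e1, e2] at this
      exact this) a
  exact this

theorem exists_clm_indicatorConstLp {S Z : Type*} [MeasurableSpace S] {ν : Measure S}
    [IsProbabilityMeasure ν] [NormedAddCommGroup Z] [NormedSpace ℝ Z] {A : Set S}
    (hA : MeasurableSet A) :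
    ∃ T : Z →L[ℝ] Lp Z 1 ν, ∀ z, T z = indicatorConstLp 1 hA (measure_ne_top ν A) z := by
  refine ⟨LinearMap.mkContinuous
    { toFun := fun z => indicatorConstLp 1 hA (measure_ne_top ν A) z
      map_add' := fun z w => (indicatorConstLp_add ..).symm
      map_smul' := fun c z => ?_ } (ν.real A) fun z => ?_, fun z => rfl⟩
  · refine Lp.ext ?_
    filter_upwards [Lp.coeFn_smul c (indicatorConstLp 1 hA (measure_ne_top ν A) z),
      indicatorConstLp_coeFn (p := 1) (hs := hA) (hμs := measure_ne_top ν A) (c := z),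
      indicatorConstLp_coeFn (p := 1) (hs := hA) (hμs := measure_ne_top ν A) (c := c • z)]
      with s h1 h2 h3
    rw [RingHom.id_apply, h1, h3, Pi.smul_apply, h2]
    by_cases hs : s ∈ A <;> simp [hs]
  · refine (norm_indicatorConstLp_le (p := 1) (hs := hA) (hμs := measure_ne_top ν A)
      (c := z)).trans ?_
    simp [mul_comm]

theorem exists_integral_functional {S Z : Type*} [MeasurableSpace S] (ν : Measure S)
    [NormedAddCommGroup Z] [NormedSpace ℝ Z] [SecondCountableTopology Z]
    {φ : S → StrongDual ℝ Z} (hφ : ∀ z, Measurable fun s => φ s z) {M : ℝ}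
    (hM : ∀ s, ‖φ s‖ ≤ M) :
    ∃ Ψ : StrongDual ℝ (Lp Z 1 ν), (∀ f, ‖Ψ f‖ ≤ M * ‖f‖) ∧
      ∀ f : Lp Z 1 ν, Ψ f = ∫ s, φ s (f s) ∂ν := by
  have hintg : ∀ f : Lp Z 1 ν, Integrable (fun s => φ s (f s)) ν := fun f =>
    integrable_eval hφ hM (L1.integrable_coeFn f)
  let L : Lp Z 1 ν →ₗ[ℝ] ℝ :=
    { toFun := fun f => ∫ s, φ s (f s) ∂ν
      map_add' := fun f g => by
        rw [← integral_add (hintg f) (hintg g)]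
        refine integral_congr_ae ?_
        filter_upwards [Lp.coeFn_add f g] with s hs
        rw [hs, Pi.add_apply, map_add]
      map_smul' := fun c f => by
        rw [RingHom.id_apply, smul_eq_mul, ← integral_const_mul]
        refine integral_congr_ae ?_
        filter_upwards [Lp.coeFn_smul c f] with s hs
        rw [hs, Pi.smul_apply, map_smul, smul_eq_mul] }
  have hL : ∀ f, ‖L f‖ ≤ M * ‖f‖ := fun f => by
    rw [L1.norm_eq_integral_norm, ← integral_const_mul]
    refine (norm_integral_le_integral_norm _).trans (integral_mono (hintg f).norm
      ((L1.integrable_coeFn f).norm.const_mul M) fun s => ?_)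
    exact (φ s).le_of_opNorm_le (hM s) _
  exact ⟨L.mkContinuous M hL, hL, fun f => rfl⟩

/-- Functionals on `L¹(ν,Z)`, `Z` separable, are given by bounded weak-* measurable fields of
functionals on `Z`. -/
theorem exists_representation {S Z : Type*} [MeasurableSpace S] (ν : Measure S)
    [IsProbabilityMeasure ν] [NormedAddCommGroup Z] [NormedSpace ℝ Z] [SecondCountableTopology Z]
    (Φ : StrongDual ℝ (Lp Z 1 ν)) :
    ∃ φ : S → StrongDual ℝ Z, (∀ s, ‖φ s‖ ≤ ‖Φ‖) ∧ (∀ z, Measurable fun s => φ s z) ∧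
      ∀ f : Lp Z 1 ν, Φ f = ∫ s, φ s (f s) ∂ν := by
  classical
  choose d hdm hdi hd using exists_scalar_density ν Φ
  let z : ℕ → Z := TopologicalSpace.denseSeq Z
  have hz : DenseRange z := TopologicalSpace.denseRange_denseSeq Z
  have hgood : ∀ᵐ s ∂ν, ∀ q : ℕ →₀ ℚ, |q.sum fun i r => (r : ℝ) * d (z i) s| ≤
      ‖Φ‖ * ‖q.sum fun i r => (r : ℝ) • z i‖ := by
    rw [ae_all_iff]
    intro q
    refine abs_le_of_setIntegral_bound
      (integrable_finsetSum _ fun i _ => (hdi (z i)).const_mul _) fun A hA => ?_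
    obtain ⟨T, hT⟩ := exists_clm_indicatorConstLp (Z := Z) (ν := ν) hA
    have h1 : ∫ s in A, (q.sum fun i r => (r : ℝ) * d (z i) s) ∂ν =
        Φ (T (q.sum fun i r => (r : ℝ) • z i)) := by
      simp only [Finsupp.sum, map_sum, map_smul]
      rw [integral_finsetSum _ fun i _ => ((hdi (z i)).const_mul _).integrableOn]
      refine Finset.sum_congr rfl fun i _ => ?_
      rw [integral_const_mul, hd _ _ hA, hT, smul_eq_mul]
    change |∫ s in A, (q.sum fun i r => (r : ℝ) * d (z i) s) ∂ν| ≤ _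
    rw [h1, hT, mul_assoc]
    refine (Φ.le_opNorm _).trans (mul_le_mul_of_nonneg_left ?_ (norm_nonneg _))
    refine (norm_indicatorConstLp_le (p := 1) (hs := hA) (hμs := measure_ne_top ν A)).trans ?_
    simp
  obtain ⟨N, hN, hNm, hN0⟩ := exists_measurable_superset_of_null (ae_iff.1 hgood)
  have hex : ∀ s : S, ∃ ψ : StrongDual ℝ Z, ‖ψ‖ ≤ ‖Φ‖ ∧
      ∀ i, ψ (z i) = Nᶜ.indicator (d (z i)) s := by
    intro s
    by_cases hs : s ∈ N
    · exact ⟨0, by simp, fun i => by simp [hs]⟩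
    · obtain ⟨ψ, h1, h2⟩ := exists_norm_le_functional_of_rat z (fun i => d (z i) s) ‖Φ‖
        (norm_nonneg _) (by by_contra h; exact hs (hN h))
      exact ⟨ψ, h1, fun i => by simp [hs, h2]⟩
  choose φ hφM hφz using hex
  have hmeas : ∀ z, Measurable fun s => φ s z := by
    intro y
    obtain ⟨u, hu, hlim⟩ := mem_closure_iff_seq_limit.1 (hz y)
    refine measurable_of_tendsto_metrizable (f := fun j s => φ s (u j)) (fun j => ?_)
      (tendsto_pi_nhds.2 fun s => ((φ s).continuous.tendsto y).comp hlim)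
    obtain ⟨i, hi⟩ := hu j
    simp only [← hi, hφz]
    exact (hdm _).indicator hNm.compl
  obtain ⟨Ψ, -, hΨ⟩ := exists_integral_functional ν hmeas hφM
  refine ⟨φ, hφM, hmeas, fun f => ?_⟩
  rw [← hΨ]
  have hind : ∀ (y : Z) (A : Set S) (hA : MeasurableSet A),
      Φ (indicatorConstLp 1 hA (measure_ne_top ν A) y) =
        Ψ (indicatorConstLp 1 hA (measure_ne_top ν A) y) := by
    intro y A hA
    obtain ⟨T, hT⟩ := exists_clm_indicatorConstLp (Z := Z) (ν := ν) hA
    rw [← hT]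
    refine hz.induction_on (p := fun y => Φ (T y) = Ψ (T y)) y
      (isClosed_eq (by fun_prop) (by fun_prop)) fun i => ?_
    rw [hT, ← hd, hΨ, ← integral_indicator hA]
    refine integral_congr_ae ?_
    filter_upwards [indicatorConstLp_coeFn (p := 1) (hs := hA) (hμs := measure_ne_top ν A)
      (c := z i), compl_mem_ae_iff.2 hN0] with s h1 h2
    rw [h1]
    by_cases hs : s ∈ A
    · simp [hs, hφz, indicator_of_mem h2]
    · simp [hs]
  refine Lp.induction (p := 1) ENNReal.one_ne_top (motive := fun f => Φ f = Ψ f) ?_ ?_ ?_ f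
  · intro c A hA hAf
    exact hind c A hA
  · intro f g hf hg _ h1 h2
    rw [map_add, map_add, h1, h2]
  · exact isClosed_eq Φ.continuous Ψ.continuous

/-- The fair coin. -/
def fairCoin : Measure Bool := (2 : ℝ≥0∞)⁻¹ • (Measure.dirac true + Measure.dirac false)

instance : IsProbabilityMeasure fairCoin := ⟨by
  simp [fairCoin, ENNReal.inv_two_add_inv_two]⟩

/-- The space of sequences of independent fair coin tosses. -/
def coinTosses : Measure (ℕ → Bool) := Measure.infinitePi fun _ => fairCoin

instance : IsProbabilityMeasure coinTosses := by unfold coinTosses; infer_instance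

/-- The sign carried by a coin toss. -/
def coinSign (b : Bool) : ℝ := if b then 1 else -1

theorem abs_coinSign (b : Bool) : |coinSign b| = 1 := by cases b <;> simp [coinSign]

theorem coinSign_xor (a b : Bool) : coinSign (xor a b) = - (coinSign a * coinSign b) := by
  cases a <;> cases b <;> simp [coinSign]

theorem coinSign_mul_self (b : Bool) : coinSign b * coinSign b = 1 := by
  cases b <;> simp [coinSign]

theorem measurable_coinSign (n : ℕ) : Measurable fun s : ℕ → Bool => coinSign (s n) :=
  (measurable_of_finite coinSign).comp (measurable_pi_apply n)

theorem map_xor_fairCoin (b : Bool) : fairCoin.map (xor b) = fairCoin := by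
  have h : Measurable (xor b) := measurable_of_finite _
  rw [fairCoin, Measure.map_smul, Measure.map_add _ _ h, Measure.map_dirac' h, Measure.map_dirac' h]
  cases b
  · rfl
  · rw [add_comm]; rfl

theorem map_xor_coinTosses (b : ℕ → Bool) :
    coinTosses.map (fun s n => xor (b n) (s n)) = coinTosses := by
  rw [coinTosses, Measure.infinitePi_map_pi (fun _ => fairCoin)
    (fun n => measurable_of_finite (xor (b n)))]
  simp only [map_xor_fairCoin]

theorem integral_xor_coinTosses {E : Type*} [NormedAddCommGroup E] [NormedSpace ℝ E]
    (b : ℕ → Bool) {g : (ℕ → Bool) → E} (hg : AEStronglyMeasurable g coinTosses) :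
    ∫ s, g (fun n => xor (b n) (s n)) ∂coinTosses = ∫ s, g s ∂coinTosses := by
  have hm : Measurable fun (s : ℕ → Bool) n => xor (b n) (s n) :=
    measurable_pi_lambda _ fun n => (measurable_of_finite (xor (b n))).comp (measurable_pi_apply n)
  conv_rhs => rw [← map_xor_coinTosses b]
  rw [integral_map hm.aemeasurable]
  rwa [map_xor_coinTosses b]

theorem integral_coinSign_mul {i j : ℕ} (h : i ≠ j) :
    ∫ s : ℕ → Bool, coinSign (s i) * coinSign (s j) ∂coinTosses = 0 := by
  have h1 := integral_xor_coinTosses (fun n => decide (n = i))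
    (((measurable_coinSign i).mul (measurable_coinSign j)).aestronglyMeasurable (μ := coinTosses))
  have h2 : ∀ s : ℕ → Bool, coinSign (xor (decide (i = i)) (s i)) *
      coinSign (xor (decide (j = i)) (s j)) = -(coinSign (s i) * coinSign (s j)) := by
    intro s
    rw [coinSign_xor, coinSign_xor]
    simp [h.symm, coinSign]
  have h3 : ∫ s : ℕ → Bool, -(coinSign (s i) * coinSign (s j)) ∂coinTosses =
      ∫ s : ℕ → Bool, coinSign (s i) * coinSign (s j) ∂coinTosses := by
    refine Eq.trans ?_ h1
    exact integral_congr_ae (Eventually.of_forall fun s => (h2 s).symm)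
  rw [integral_neg] at h3
  linarith


theorem tendsto_integral_coinSign_mul {g : (ℕ → Bool) → ℝ} (hg : MemLp g 2 coinTosses) :
    Tendsto (fun n => ∫ s, coinSign (s n) * g s ∂coinTosses) atTop (𝓝 0) := by
  have hr : ∀ n, MemLp (fun s : ℕ → Bool => coinSign (s n)) 2 coinTosses := fun n =>
    MemLp.of_bound (measurable_coinSign n).aestronglyMeasurable 1
      (Eventually.of_forall fun s => by rw [Real.norm_eq_abs, abs_coinSign])
  have hin : ∀ {f g : (ℕ → Bool) → ℝ} (hf : MemLp f 2 coinTosses) (hg : MemLp g 2 coinTosses),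
      inner ℝ (hf.toLp f) (hg.toLp g) = ∫ s, f s * g s ∂coinTosses := by
    intro f g hf hg
    rw [L2.inner_def]
    refine integral_congr_ae ?_
    filter_upwards [hf.coeFn_toLp, hg.coeFn_toLp] with s h1 h2
    rw [h1, h2]
    simp [mul_comm]
  have ho : Orthonormal ℝ fun n => (hr n).toLp _ := by
    rw [orthonormal_iff_ite]
    intro i j
    rw [hin]
    split_ifs with h
    · subst h
      simp [coinSign_mul_self]
    · exact integral_coinSign_mul h
  have h0 := (ho.inner_products_summable (hg.toLp g)).tendsto_atTop_zero
  have h1 := h0.sqrt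
  simp only [Real.sqrt_zero, norm_nonneg, Real.sqrt_sq] at h1
  have h2 := tendsto_zero_iff_norm_tendsto_zero.2 h1
  refine h2.congr fun n => ?_
  rw [hin]

theorem integrable_coinSign_smul {E : Type*} [NormedAddCommGroup E] [NormedSpace ℝ E] (n : ℕ)
    (x : E) : Integrable (fun s : ℕ → Bool => coinSign (s n) • x) coinTosses := by
  refine Integrable.smul_const ?_ x
  exact Integrable.of_bound (measurable_coinSign n).aestronglyMeasurable 1
    (Eventually.of_forall fun s => by rw [Real.norm_eq_abs, abs_coinSign])

theorem WTendsto.coinSign_smul {E : Type*} [NormedAddCommGroup E] [NormedSpace ℝ E]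
    [SecondCountableTopology E] {u : ℕ → E} {x : E} (hu : WTendsto u atTop x) {C : ℝ}
    (hC : ∀ n, ‖u n‖ ≤ C) :
    WTendsto (fun n => (integrable_coinSign_smul n (u n)).toL1 _) atTop 0 := by
  intro Φ
  obtain ⟨φ, hM, hm, hφ⟩ := exists_representation coinTosses Φ
  have hC0 : 0 ≤ C := (norm_nonneg _).trans (hC 0)
  have hb : ∀ y, Integrable (fun s => φ s y) coinTosses := fun y =>
    Integrable.of_bound (hm y).aestronglyMeasurable (‖Φ‖ * ‖y‖)
      (Eventually.of_forall fun s => (φ s).le_of_opNorm_le (hM s) y)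
  have hbs : ∀ n y, Integrable (fun s : ℕ → Bool => coinSign (s n) * φ s y) coinTosses := by
    intro n y
    refine (hb y).norm.mono' ((measurable_coinSign n).mul (hm y)).aestronglyMeasurable ?_
    refine Eventually.of_forall fun s => ?_
    rw [norm_mul, Real.norm_eq_abs, abs_coinSign, one_mul]
  have h1 : ∀ n, Φ ((integrable_coinSign_smul n (u n)).toL1 _) =
      ∫ s : ℕ → Bool, coinSign (s n) * φ s (u n - x) ∂coinTosses +
        ∫ s : ℕ → Bool, coinSign (s n) * φ s x ∂coinTosses := by
    intro n
    rw [← integral_add (hbs _ _) (hbs _ _), hφ]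
    refine integral_congr_ae ?_
    filter_upwards [Integrable.coeFn_toL1 (integrable_coinSign_smul n (u n))] with s hs
    rw [hs, map_smul, smul_eq_mul, map_sub]
    ring
  simp only [h1, map_zero]
  rw [← add_zero (0 : ℝ)]
  refine Tendsto.add ?_ (tendsto_integral_coinSign_mul (MemLp.of_bound
    (hm x).aestronglyMeasurable (‖Φ‖ * ‖x‖)
      (Eventually.of_forall fun s => (φ s).le_of_opNorm_le (hM s) x)))
  rw [← integral_zero (ℕ → Bool) ℝ (μ := coinTosses)]
  refine tendsto_integral_of_dominated_convergence (fun _ => ‖Φ‖ * (C + ‖x‖))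
    (fun n => (hbs n _).1) (integrable_const _) (fun n => Eventually.of_forall fun s => ?_)
    (Eventually.of_forall fun s => ?_)
  · rw [norm_mul, Real.norm_eq_abs, abs_coinSign, one_mul]
    refine ((φ s).le_of_opNorm_le (hM s) _).trans
      (mul_le_mul_of_nonneg_left ((norm_sub_le _ _).trans ?_) (norm_nonneg _))
    linarith [hC n]
  · rw [tendsto_zero_iff_norm_tendsto_zero]
    have := ((hu (φ s)).sub_const (φ s x)).norm
    simp only [sub_self, norm_zero] at this
    refine this.congr fun n => ?_
    rw [norm_mul, Real.norm_eq_abs (coinSign _), abs_coinSign, one_mul, map_sub]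


theorem coeFn_finsupp_sum {ι S E : Type*} [MeasurableSpace S] {ν : Measure S}
    [NormedAddCommGroup E] [NormedSpace ℝ E] (a : ι →₀ ℝ) (f : ι → Lp E 1 ν) :
    ((a.sum fun i r => r • f i : Lp E 1 ν) : S → E) =ᵐ[ν]
      fun s => ∑ i ∈ a.support, a i • f i s := by
  classical
  have h : ∀ t : Finset ι, ((∑ i ∈ t, a i • f i : Lp E 1 ν) : S → E) =ᵐ[ν]
      fun s => ∑ i ∈ t, a i • f i s := by
    intro t
    induction t using Finset.induction_on with
    | empty => exact Lp.coeFn_zero E 1 ν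
    | insert i t hi ih =>
      rw [Finset.sum_insert hi]
      filter_upwards [Lp.coeFn_add (a i • f i) (∑ i ∈ t, a i • f i), Lp.coeFn_smul (a i) (f i), ih]
        with s h1 h2 h3
      rw [h1, Pi.add_apply, h2, h3, Finset.sum_insert hi, Pi.smul_apply]
  exact h _

theorem WTendsto.subspace {ι E : Type*} [NormedAddCommGroup E] [NormedSpace ℝ E]
    {M : Submodule ℝ E} {u : ι → M} {l : Filter ι} {x : M}
    (hu : WTendsto (fun i => (u i : E)) l x) : WTendsto u l x := by
  intro φ
  obtain ⟨g, hg, -⟩ := exists_extension_norm_eq M φ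
  simpa only [hg] using hu g

theorem isSeparable_span_closure {E : Type*} [NormedAddCommGroup E] [NormedSpace ℝ E] {s : Set E}
    (hs : s.Countable) :
    SecondCountableTopology (Submodule.span ℝ s).topologicalClosure := by
  have h : TopologicalSpace.IsSeparable ((Submodule.span ℝ s).topologicalClosure : Set E) := by
    rw [Submodule.topologicalClosure_coe]
    exact (hs.isSeparable.span (R := ℝ)).closure
  have := h.separableSpace
  exact UniformSpace.secondCountable_of_separable _

/-- A sequence dominated by the random signed sums of a weakly convergent sequence is weakly
null. -/
theorem WTendsto.of_coinSign_sum_le {E F : Type*} [NormedAddCommGroup E] [NormedSpace ℝ E]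
    [NormedAddCommGroup F] [NormedSpace ℝ F] {u : ℕ → E} {x : E} (hu : WTendsto u atTop x)
    {v : ℕ → F}
    (h : ∀ a : ℕ →₀ ℝ, ‖a.sum fun i r => r • v i‖ ≤
      ∫ s, ‖∑ i ∈ a.support, coinSign (s i) • a i • u i‖ ∂coinTosses) :
    WTendsto v atTop 0 := by
  obtain ⟨C, hC⟩ := (isRelWeaklyCompact_range hu).exists_norm_le
  let M : Submodule ℝ E := (Submodule.span ℝ (insert x (range u))).topologicalClosure
  have hsub : insert x (range u) ⊆ (M : Set E) :=
    Submodule.subset_span.trans (Submodule.le_topologicalClosure _)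
  have : SecondCountableTopology M := isSeparable_span_closure ((countable_range u).insert x)
  let u' : ℕ → M := fun n => ⟨u n, hsub (mem_insert_of_mem _ (mem_range_self n))⟩
  let x' : M := ⟨x, hsub (mem_insert _ _)⟩
  have hu' : WTendsto u' atTop x' := WTendsto.subspace hu
  have hw := hu'.coinSign_smul (C := C) fun n => hC _ (mem_range_self n)
  refine hw.of_norm_sum_le fun a => (h a).trans (le_of_eq ?_)
  rw [L1.norm_eq_integral_norm]
  refine integral_congr_ae ?_
  have h1 : ∀ᵐ s ∂coinTosses, ∀ n, ((integrable_coinSign_smul n (u' n)).toL1 _) s =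
      coinSign (s n) • u' n := ae_all_iff.2 fun n => Integrable.coeFn_toL1 _
  filter_upwards [h1, coeFn_finsupp_sum a fun n => (integrable_coinSign_smul n (u' n)).toL1 _]
    with s h1 h2
  rw [h2]
  simp only [h1]
  rw [Submodule.norm_coe (∑ i ∈ a.support, a i • coinSign (s i) • u' i) |>.symm,
    Submodule.coe_sum]
  refine congrArg _ (Finset.sum_congr rfl fun i _ => ?_)
  rw [smul_comm]
  rfl

/-- The mean norm of a random signed sum. -/
def signNorm {E : Type*} [NormedAddCommGroup E] [NormedSpace ℝ E] (T : Finset ℕ) (y : ℕ → E) : ℝ :=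
  ∫ s, ‖∑ i ∈ T, coinSign (s i) • y i‖ ∂coinTosses

theorem continuous_coinSign (n : ℕ) : Continuous fun s : ℕ → Bool => coinSign (s n) :=
  (continuous_of_discreteTopology (f := coinSign)).comp (continuous_apply n)

theorem norm_signedSum_le {E : Type*} [NormedAddCommGroup E] [NormedSpace ℝ E] (T : Finset ℕ)
    (y : ℕ → E) (s : ℕ → Bool) : ‖∑ i ∈ T, coinSign (s i) • y i‖ ≤ ∑ i ∈ T, ‖y i‖ := by
  refine (norm_sum_le _ _).trans (Finset.sum_le_sum fun i _ => ?_)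
  rw [norm_smul, Real.norm_eq_abs, abs_coinSign, one_mul]

theorem integrable_signedSum {E : Type*} [NormedAddCommGroup E] [NormedSpace ℝ E] (T : Finset ℕ)
    (y : ℕ → E) : Integrable (fun s : ℕ → Bool => ∑ i ∈ T, coinSign (s i) • y i) coinTosses :=
  integrable_finsetSum _ fun i _ => integrable_coinSign_smul i (y i)

theorem signNorm_nonneg {E : Type*} [NormedAddCommGroup E] [NormedSpace ℝ E] (T : Finset ℕ)
    (y : ℕ → E) : 0 ≤ signNorm T y := integral_nonneg fun _ => norm_nonneg _

theorem signNorm_xor {E : Type*} [NormedAddCommGroup E] [NormedSpace ℝ E] (T : Finset ℕ)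
    (b : ℕ → Bool) (y : ℕ → E) : signNorm T (fun i => coinSign (b i) • y i) = signNorm T y := by
  have := integral_xor_coinTosses b (integrable_signedSum T y).norm.1
  rw [signNorm, signNorm, ← this]
  refine integral_congr_ae (Eventually.of_forall fun s => ?_)
  simp only [coinSign_xor, neg_smul, Finset.sum_neg_distrib, norm_neg]
  refine congrArg _ (Finset.sum_congr rfl fun i _ => ?_)
  rw [smul_smul, mul_comm]

/-- The contraction principle for random signed sums. -/
theorem signNorm_indicator_le {E : Type*} [NormedAddCommGroup E] [NormedSpace ℝ E] (T : Finset ℕ)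
    (y : ℕ → E) (A : Set ℕ) : signNorm T (A.indicator y) ≤ signNorm T y := by
  classical
  have h1 : ∀ i, A.indicator y i =
      (2 : ℝ)⁻¹ • (y i + coinSign (decide (i ∈ A)) • y i) := by
    intro i
    by_cases hi : i ∈ A
    · simp [hi, coinSign, ← two_smul ℝ (y i), smul_smul]
    · simp [hi, coinSign]
  have h2 : ∀ s : ℕ → Bool, ‖∑ i ∈ T, coinSign (s i) • A.indicator y i‖ ≤
      (2 : ℝ)⁻¹ * (‖∑ i ∈ T, coinSign (s i) • y i‖ +
        ‖∑ i ∈ T, coinSign (s i) • coinSign (decide (i ∈ A)) • y i‖) := by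
    intro s
    have : ∑ i ∈ T, coinSign (s i) • A.indicator y i = (2 : ℝ)⁻¹ •
        (∑ i ∈ T, coinSign (s i) • y i +
          ∑ i ∈ T, coinSign (s i) • coinSign (decide (i ∈ A)) • y i) := by
      rw [← Finset.sum_add_distrib, Finset.smul_sum]
      refine Finset.sum_congr rfl fun i _ => ?_
      rw [h1, smul_comm, smul_add (coinSign _)]
    rw [this, norm_smul]
    norm_num
    exact norm_add_le _ _
  have h3 := integral_mono (integrable_signedSum T _).norm
    (((integrable_signedSum T y).norm.add (integrable_signedSum T _).norm).const_mul _) h2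
  rw [integral_const_mul] at h3
  simp only [Pi.add_apply] at h3
  rw [integral_add (integrable_signedSum T y).norm (integrable_signedSum T _).norm] at h3
  have h4 := signNorm_xor T (fun i => decide (i ∈ A)) y
  unfold signNorm at h4 ⊢
  linarith

theorem norm_le_signNorm {E : Type*} [NormedAddCommGroup E] [NormedSpace ℝ E] {T : Finset ℕ}
    (y : ℕ → E) {m : ℕ} (hm : m ∈ T) : ‖y m‖ ≤ signNorm T y := by
  classical
  refine le_trans (le_of_eq ?_) (signNorm_indicator_le T y {m})
  have : ∀ s : ℕ → Bool, ‖∑ i ∈ T, coinSign (s i) • indicator {m} y i‖ = ‖y m‖ := by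
    intro s
    rw [Finset.sum_eq_single_of_mem m hm fun i _ hi => by simp [hi]]
    simp [norm_smul, abs_coinSign]
  rw [signNorm, integral_congr_ae (Eventually.of_forall this)]
  simp

theorem integrable_prod_signedSum {S E : Type*} [MeasurableSpace S] {ν : Measure S}
    [IsFiniteMeasure ν] [NormedAddCommGroup E] [NormedSpace ℝ E] (T : Finset ℕ)
    {f : ℕ → S → E} (hf : ∀ i, Integrable (f i) ν) :
    Integrable (fun p : S × (ℕ → Bool) => ∑ i ∈ T, coinSign (p.2 i) • f i p.1)
      (ν.prod coinTosses) := by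
  refine integrable_finsetSum _ fun i _ => ?_
  have h1 : Integrable (fun p : S × (ℕ → Bool) => f i p.1) (ν.prod coinTosses) :=
    (hf i).comp_fst coinTosses
  refine h1.norm.mono' ?_ (Eventually.of_forall fun p => ?_)
  · exact ((measurable_coinSign i).comp measurable_snd).aestronglyMeasurable.smul h1.1
  · rw [norm_smul, Real.norm_eq_abs, abs_coinSign, one_mul]

theorem integrable_signNorm {S E : Type*} [MeasurableSpace S] {ν : Measure S}
    [IsFiniteMeasure ν] [NormedAddCommGroup E] [NormedSpace ℝ E] (T : Finset ℕ)
    {f : ℕ → S → E} (hf : ∀ i, Integrable (f i) ν) :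
    Integrable (fun ω => signNorm T fun i => f i ω) ν :=
  (integrable_prod_signedSum T hf).norm.integral_prod_left

theorem norm_signedSum_eq {S E : Type*} [MeasurableSpace S] {ν : Measure S}
    [NormedAddCommGroup E] [NormedSpace ℝ E] (a : ℕ →₀ ℝ)
    (f : ℕ → Lp E 1 ν) (s : ℕ → Bool) : ‖∑ i ∈ a.support, coinSign (s i) • a i • f i‖ =
      ∫ ω, ‖∑ i ∈ a.support, coinSign (s i) • a i • f i ω‖ ∂ν := by
  rw [L1.norm_eq_integral_norm]
  refine integral_congr_ae ?_
  have h2 : ∀ᵐ ω ∂ν, ∀ i, (coinSign (s i) • f i) ω = coinSign (s i) • f i ω :=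
    ae_all_iff.2 fun i => Lp.coeFn_smul _ _
  filter_upwards [coeFn_finsupp_sum a fun i => coinSign (s i) • f i, h2] with ω h3 h4
  have : ∑ i ∈ a.support, coinSign (s i) • a i • f i =
      a.sum fun i r => r • coinSign (s i) • f i :=
    Finset.sum_congr rfl fun i _ => smul_comm _ _ _
  rw [this, h3]
  refine congrArg _ (Finset.sum_congr rfl fun i _ => ?_)
  rw [h4, smul_comm]

theorem integral_signNorm {S E : Type*} [MeasurableSpace S] {ν : Measure S}
    [IsFiniteMeasure ν] [NormedAddCommGroup E] [NormedSpace ℝ E] (T : Finset ℕ)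
    {f : ℕ → S → E} (hf : ∀ i, Integrable (f i) ν) :
    ∫ s : ℕ → Bool, ∫ ω, ‖∑ i ∈ T, coinSign (s i) • f i ω‖ ∂ν ∂coinTosses =
      ∫ ω, signNorm T (fun i => f i ω) ∂ν :=
  (integral_integral_swap (f := fun ω (s : ℕ → Bool) => ‖∑ i ∈ T, coinSign (s i) • f i ω‖)
    (integrable_prod_signedSum T hf).norm).symm

theorem integral_norm_signedSum {S E : Type*} [MeasurableSpace S] {ν : Measure S}
    [IsFiniteMeasure ν] [NormedAddCommGroup E] [NormedSpace ℝ E] (a : ℕ →₀ ℝ)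
    (f : ℕ → Lp E 1 ν) :
    ∫ s, ‖∑ i ∈ a.support, coinSign (s i) • a i • f i‖ ∂coinTosses =
      ∫ ω, signNorm a.support (fun i => a i • f i ω) ∂ν := by
  have h : ∀ i, Integrable (fun ω => a i • f i ω) ν :=
    fun i => Integrable.smul (a i) (L1.integrable_coeFn (f i))
  rw [← integral_signNorm a.support h]
  exact integral_congr_ae (Eventually.of_forall fun s => norm_signedSum_eq a f s)

theorem exists_disjoint_of_small {S : Type*} [MeasurableSpace S] {ν : Measure S}
    {g : ℕ → S → ℝ} (hg : ∀ n, Integrable (g n) ν) (hg0 : ∀ n s, 0 ≤ g n s) {A : ℕ → Set S}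
    (hA : ∀ n, MeasurableSet (A n)) (hsum : ∑' n, ν (A n) ≠ ∞) {ε : ℝ} (hε : 0 < ε)
    (h : ∀ n, ε ≤ ∫ s in A n, g n s ∂ν) :
    ∃ (θ : ℕ → ℕ) (A' : ℕ → Set S), StrictMono θ ∧ (∀ n, MeasurableSet (A' n)) ∧
      Pairwise (Function.onFun Disjoint A') ∧ ∀ n, ε / 2 ≤ ∫ s in A' n, g (θ n) s ∂ν := by
  let B : ℕ → Set S := fun n => ⋃ k, A (k + n)
  have hBm : ∀ n, MeasurableSet (B n) := fun n => MeasurableSet.iUnion fun k => hA _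
  have hB : Tendsto (fun n => ν (B n)) atTop (𝓝 0) :=
    tendsto_of_tendsto_of_tendsto_of_le_of_le tendsto_const_nhds
      (ENNReal.tendsto_sum_nat_add _ hsum) (fun _ => zero_le) fun n => measure_iUnion_le _
  have hsmall : ∀ m, ∃ n, m < n ∧ ∫ s in B n, g m s ∂ν ≤ ε / 2 := by
    intro m
    have h1 := (hg m).tendsto_setIntegral_nhds_zero hB
    obtain ⟨n, hn1, hn2⟩ := ((h1.eventually_le_const (half_pos hε)).and
      (eventually_gt_atTop m)).exists
    exact ⟨n, hn2, hn1⟩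
  choose nxt hnxt hnxti using hsmall
  let θ : ℕ → ℕ := fun j => nxt^[j] 0
  have hθs : ∀ j, θ (j + 1) = nxt (θ j) := fun j => Function.iterate_succ_apply' _ _ _
  have hθ : StrictMono θ := strictMono_nat_of_lt_succ fun j => by rw [hθs]; exact hnxt _
  refine ⟨θ, fun j => A (θ j) \ B (θ (j + 1)), hθ, fun n => (hA _).diff (hBm _), ?_, fun j => ?_⟩
  · refine (pairwise_disjoint_on _).2 fun i j hij => ?_
    refine disjoint_left.2 fun s hs hs' => hs.2 (mem_iUnion.2 ⟨θ j - θ (i + 1), ?_⟩)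
    rw [Nat.sub_add_cancel (hθ.monotone hij)]
    exact hs'.1
  · have h1 : ∫ s in A (θ j), g (θ j) s ∂ν ≤ ∫ s in A (θ j) \ B (θ (j + 1)), g (θ j) s ∂ν +
        ∫ s in B (θ (j + 1)), g (θ j) s ∂ν := by
      rw [← setIntegral_union disjoint_sdiff_left (hBm _) (hg _).integrableOn
        (hg _).integrableOn]
      refine setIntegral_mono_set (hg _).integrableOn
        (Eventually.of_forall fun s => hg0 _ s) (Eventually.of_forall ?_)
      intro s hs
      by_cases hb : s ∈ B (θ (j + 1))
      · exact Or.inr hb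
      · exact Or.inl ⟨hs, hb⟩
    have h2 := hnxti (θ j)
    rw [← hθs] at h2
    linarith [h (θ j)]

theorem not_wtendsto_of_disjoint {S E : Type*} [MeasurableSpace S] {ν : Measure S}
    [IsFiniteMeasure ν] [NormedAddCommGroup E] [NormedSpace ℝ E] {f : ℕ → Lp E 1 ν}
    {A : ℕ → Set S} (hA : ∀ n, MeasurableSet (A n)) (hd : Pairwise (Function.onFun Disjoint A))
    {ε : ℝ} (hε : 0 < ε) (h : ∀ n, ε ≤ ∫ s in A n, ‖f n s‖ ∂ν) (x : Lp E 1 ν) :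
    ¬ WTendsto f atTop x := by
  intro hf
  have hw : WTendsto (fun _ : ℕ => ε) atTop 0 := by
    refine hf.of_coinSign_sum_le fun a => ?_
    rw [integral_norm_signedSum]
    have hi : ∀ i, Integrable (fun ω => a i • f i ω) ν :=
      fun i => Integrable.smul (a i) (L1.integrable_coeFn (f i))
    calc ‖a.sum fun _ r => r • ε‖ ≤ ∑ i ∈ a.support, |a i| * ε := by
          refine (norm_sum_le _ _).trans (Finset.sum_le_sum fun i _ => ?_)
          rw [norm_smul, Real.norm_eq_abs, Real.norm_eq_abs, abs_of_pos hε]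
      _ ≤ ∑ i ∈ a.support, ∫ ω in A i, signNorm a.support (fun i => a i • f i ω) ∂ν := by
          refine Finset.sum_le_sum fun i hi' => ?_
          refine (mul_le_mul_of_nonneg_left (h i) (abs_nonneg _)).trans ?_
          rw [← integral_const_mul]
          refine integral_mono ((L1.integrable_coeFn (f i)).norm.const_mul _).integrableOn
            (integrable_signNorm a.support hi).integrableOn fun ω => ?_
          refine le_trans (le_of_eq ?_) (norm_le_signNorm (fun i => a i • f i ω) hi')
          rw [norm_smul, Real.norm_eq_abs]
      _ = ∫ ω in ⋃ i ∈ a.support, A i, signNorm a.support (fun i => a i • f i ω) ∂ν := by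
          rw [integral_biUnion_finset a.support (fun i _ => hA i) (fun i _ j _ hij => hd hij)
            (fun i _ => (integrable_signNorm a.support hi).integrableOn)]
      _ ≤ _ := setIntegral_le_integral (integrable_signNorm a.support hi)
          (Eventually.of_forall fun ω => signNorm_nonneg _ _)
  have h1 := hw (ContinuousLinearMap.id ℝ ℝ)
  have h2 := tendsto_nhds_unique h1 tendsto_const_nhds
  simp at h2
  exact hε.ne h2

/-- Relatively weakly compact subsets of `L¹` are uniformly integrable. -/
theorem IsRelWeaklyCompact.unifIntegrableSet {S E : Type*} [MeasurableSpace S] {ν : Measure S}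
    [IsFiniteMeasure ν] [NormedAddCommGroup E] [NormedSpace ℝ E] {K : Set (Lp E 1 ν)}
    (hK : IsRelWeaklyCompact K) : UnifIntegrableSet ν K := by
  refine ⟨hK.exists_norm_le, fun ε hε => ?_⟩
  by_contra! hcon
  have hpos : ∀ n : ℕ, (0 : ℝ) < (1 / 2) ^ n := fun n => by positivity
  choose f hfK A hA hfA using fun n => hcon _ (hpos n)
  obtain ⟨x, ψ, hψ, hx⟩ := hK.exists_subseq f hfK
  let A₁ : ℕ → Set S := fun n => toMeasurable ν (A (ψ n))
  have hA₁ : ∀ n, ν (A₁ n) ≤ ENNReal.ofReal ((1 / 2) ^ n) := by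
    intro n
    rw [measure_toMeasurable]
    refine (hA _).trans (ENNReal.ofReal_le_ofReal ?_)
    exact pow_le_pow_of_le_one (by norm_num) (by norm_num) hψ.le_apply
  have hsum : ∑' n, ν (A₁ n) ≠ ∞ := by
    refine ne_top_of_le_ne_top ?_ (ENNReal.tsum_le_tsum hA₁)
    rw [← ENNReal.ofReal_tsum_of_nonneg (fun n => (hpos n).le)
      (summable_geometric_of_lt_one (by norm_num) (by norm_num))]
    exact ENNReal.ofReal_ne_top
  obtain ⟨θ, A', hθ, hA'm, hd, hA'⟩ := exists_disjoint_of_small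
    (g := fun n s => ‖f (ψ n) s‖) (fun n => (L1.integrable_coeFn _).norm)
    (fun n s => norm_nonneg _) (fun n => measurableSet_toMeasurable ν (A (ψ n))) hsum hε
    (fun n => (hfA (ψ n)).le.trans (setIntegral_mono_set
      (L1.integrable_coeFn _).norm.integrableOn (Eventually.of_forall fun s => norm_nonneg _)
      (Eventually.of_forall (subset_toMeasurable ν (A (ψ n))))))
  exact not_wtendsto_of_disjoint hA'm hd (half_pos hε) hA' x
    fun φ => (hx φ).comp hθ.tendsto_atTop

theorem continuous_cdf_of_noAtoms (ν : Measure ℝ) [IsProbabilityMeasure ν] [NullSingletonClass ν] :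
    Continuous (ProbabilityTheory.cdf ν) := by
  rw [continuous_iff_continuousAt]
  intro x
  have hm := (ProbabilityTheory.cdf ν).mono
  rw [hm.continuousAt_iff_leftLim_eq_rightLim, StieltjesFunction.rightLim_eq]
  have h1 := (ProbabilityTheory.cdf ν).measure_singleton x
  rw [ProbabilityTheory.measure_cdf, measure_singleton, eq_comm, ENNReal.ofReal_eq_zero] at h1
  exact le_antisymm (hm.leftLim_le le_rfl) (by linarith)

/-- The distribution function of a diffuse law is uniformly distributed. -/
theorem exists_map_eq_volume_unitInterval (ν : Measure ℝ) [IsProbabilityMeasure ν] [NullSingletonClass ν] :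
    ∃ g : ℝ → unitInterval, Measurable g ∧ ν.map g = volume := by
  have hc := continuous_cdf_of_noAtoms ν
  have hm := (ProbabilityTheory.cdf ν).mono
  let g : ℝ → unitInterval := fun x =>
    ⟨ProbabilityTheory.cdf ν x, ProbabilityTheory.cdf_nonneg ν x, ProbabilityTheory.cdf_le_one ν x⟩
  have hg : Continuous g := hc.subtype_mk _
  refine ⟨g, hg.measurable, ?_⟩
  have : IsProbabilityMeasure (ν.map g) := Measure.isProbabilityMeasure_map hg.measurable.aemeasurable
  refine Measure.ext_of_Iic _ _ fun t => ?_
  rw [Measure.map_apply hg.measurable measurableSet_Iic, unitInterval.volume_Iic]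
  rcases eq_or_lt_of_le t.2.2 with ht | ht
  · have : g ⁻¹' Iic t = univ := eq_univ_of_forall fun x => by
      change (ProbabilityTheory.cdf ν x) ≤ (t : ℝ)
      rw [ht]
      exact ProbabilityTheory.cdf_le_one ν x
    rw [this, ht]
    simp
  obtain ⟨b, hb⟩ := ((ProbabilityTheory.tendsto_cdf_atTop ν).eventually_const_lt ht).exists
  rcases (g ⁻¹' Iic t).eq_empty_or_nonempty with he | hne
  · rw [he, measure_empty, eq_comm, ENNReal.ofReal_eq_zero]
    by_contra! h0
    obtain ⟨x, hx⟩ := ((ProbabilityTheory.tendsto_cdf_atBot ν).eventually_lt_const h0).exists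
    have : x ∈ g ⁻¹' Iic t := hx.le
    rw [he] at this
    exact this
  · have hcl : IsClosed (g ⁻¹' Iic t) := isClosed_Iic.preimage hg
    have hbd : BddAbove (g ⁻¹' Iic t) := ⟨b, fun x hx => by
      by_contra! hlt
      exact absurd (hb.trans_le (hm hlt.le)) (not_lt.2 hx)⟩
    have ha := hcl.csSup_mem hne hbd
    set a := sSup (g ⁻¹' Iic t)
    have hS : g ⁻¹' Iic t = Iic a := by
      ext x
      exact ⟨fun hx => le_csSup hbd hx, fun hx => (hm hx).trans ha⟩
    rw [hS, ← ProbabilityTheory.ofReal_cdf ν]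
    congr 1
    refine le_antisymm ha ?_
    have hab : a ≤ b := by
      by_contra! hlt
      exact absurd (hb.trans_le (hm hlt.le)) (not_lt.2 ha)
    obtain ⟨x, hx, hxt⟩ := intermediate_value_Icc hab hc.continuousOn ⟨ha, hb.le⟩
    rw [← hxt]
    refine hm (le_csSup hbd ?_)
    exact hxt.le

/-- Any law is the image of any diffuse law. -/
theorem exists_map_eq_of_noAtoms {T Y : Type*} [MeasurableSpace T] [StandardBorelSpace T]
    [MeasurableSpace Y] [StandardBorelSpace Y] [Nonempty Y] (ν : Measure T)
    [IsProbabilityMeasure ν] [NullSingletonClass ν] (κ : Measure Y) [IsProbabilityMeasure κ] :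
    ∃ θ : T → Y, Measurable θ ∧ ν.map θ = κ := by
  have he := measurableEmbedding_embeddingReal T
  have : IsProbabilityMeasure (ν.map (embeddingReal T)) :=
    Measure.isProbabilityMeasure_map he.measurable.aemeasurable
  have : NullSingletonClass (ν.map (embeddingReal T)) := ⟨fun x => by
    rw [Measure.map_apply he.measurable (measurableSet_singleton x)]
    exact (subsingleton_singleton.preimage he.injective).measure_zero ν⟩
  obtain ⟨g, hg, hgν⟩ := exists_map_eq_volume_unitInterval (ν.map (embeddingReal T))
  obtain ⟨f, hf, hfκ⟩ := Measure.exists_measurable_map_eq κ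
  refine ⟨f ∘ g ∘ embeddingReal T, hf.comp (hg.comp he.measurable), ?_⟩
  rw [← Measure.map_map hf (hg.comp he.measurable), ← Measure.map_map hg he.measurable, hgν, hfκ]

theorem exists_near_optimal_split {S : Type*} [MeasurableSpace S] (ν : Measure S)
    [IsFiniteMeasure ν] (A : Set S) :
    ∃ B, MeasurableSet B ∧ ∀ B', MeasurableSet B' →
      min (ν (A ∩ B')) (ν (A \ B')) ≤ 2 * min (ν (A ∩ B)) (ν (A \ B)) := by
  let s : ℝ≥0∞ := ⨆ B : {B : Set S // MeasurableSet B}, min (ν (A ∩ B)) (ν (A \ B))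
  have hle : ∀ B', MeasurableSet B' → min (ν (A ∩ B')) (ν (A \ B')) ≤ s := fun B' h =>
    le_iSup (fun B : {B : Set S // MeasurableSet B} => min (ν (A ∩ B)) (ν (A \ B))) ⟨B', h⟩
  have hs : s ≠ ∞ := by
    refine ne_top_of_le_ne_top (measure_ne_top ν univ) (iSup_le fun B => ?_)
    exact (min_le_left _ _).trans (measure_mono (subset_univ _))
  rcases eq_or_ne s 0 with h0 | h0
  · exact ⟨∅, MeasurableSet.empty, fun B' h => (hle B' h).trans (by rw [h0]; exact zero_le)⟩
  · obtain ⟨B, hB⟩ := lt_iSup_iff.1 (ENNReal.half_lt_self h0 hs)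
    refine ⟨B, B.2, fun B' h => (hle B' h).trans ?_⟩
    rw [← ENNReal.div_le_iff' two_ne_zero ofNat_ne_top]
    exact hB.le

/-- A finite measure space has a measurable code in the Cantor space all of whose
fibres of positive measure are atoms. -/
theorem exists_code_fibers_atoms {S : Type*} [MeasurableSpace S] (ν : Measure S)
    [IsFiniteMeasure ν] :
    ∃ U : S → ℕ → Bool, Measurable U ∧ ∀ x, ∀ B, MeasurableSet B →
      ν (U ⁻¹' {x} ∩ B) = 0 ∨ ν (U ⁻¹' {x} \ B) = 0 := by
  classical
  choose D hDm hD using exists_near_optimal_split ν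
  let cell : List Bool → Set S := fun l =>
    List.rec univ (fun b _ A => if b then A ∩ D A else A \ D A) l
  have hcell : ∀ b l, cell (b :: l) = if b then cell l ∩ D (cell l) else cell l \ D (cell l) :=
    fun b l => rfl
  let path : S → ℕ → List Bool := fun ω n =>
    Nat.rec [] (fun _ l => decide (ω ∈ D (cell l)) :: l) n
  have hpath : ∀ ω n, path ω (n + 1) = decide (ω ∈ D (cell (path ω n))) :: path ω n :=
    fun ω n => rfl
  let U : S → ℕ → Bool := fun ω n => decide (ω ∈ D (cell (path ω n)))
  have hmem : ∀ ω n, ω ∈ cell (path ω n) := by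
    intro ω n
    induction n with
    | zero => exact mem_univ _
    | succ n ih =>
      rw [hpath, hcell]
      by_cases h : ω ∈ D (cell (path ω n)) <;> simp [h, ih]
  have hpm : ∀ n l, MeasurableSet {ω | path ω n = l} := by
    intro n
    induction n with
    | zero => exact fun l => MeasurableSet.const ([] = l)
    | succ n ih =>
      intro l
      have : {ω | path ω (n + 1) = l} = ⋃ l' : List Bool, {ω | path ω n = l'} ∩
          {ω | decide (ω ∈ D (cell l')) :: l' = l} := by
        ext ω
        simp [hpath]
      rw [this]
      refine MeasurableSet.iUnion fun l' => (ih l').inter ?_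
      cases l with
      | nil => simp
      | cons b l =>
        simp only [List.cons.injEq]
        refine MeasurableSet.inter ?_ (MeasurableSet.const _)
        cases b
        · simp only [decide_eq_false_iff_not]
          exact (hDm (cell l')).compl
        · simp only [decide_eq_true_eq]
          exact hDm (cell l')
  have hU : Measurable U := by
    refine measurable_pi_lambda _ fun n => measurable_to_bool ?_
    have : (fun ω => U ω n) ⁻¹' {true} = ⋃ l : List Bool, {ω | path ω n = l} ∩ D (cell l) := by
      ext ω
      simp [U]
    rw [this]
    exact MeasurableSet.iUnion fun l => (hpm n l).inter (hDm _)
  refine ⟨U, hU, fun x B hB => ?_⟩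
  by_contra! hcon
  set F := U ⁻¹' {x} with hF
  set c := min (ν (F ∩ B)) (ν (F \ B)) with hc
  have hc0 : c ≠ 0 := by
    rw [hc]
    rcases min_choice (ν (F ∩ B)) (ν (F \ B)) with h | h <;> rw [h]
    exacts [hcon.1, hcon.2]
  let node : ℕ → List Bool := fun n => Nat.rec [] (fun n l => x n :: l) n
  have hnode : ∀ n, node (n + 1) = x n :: node n := fun n => rfl
  have hFn : ∀ n, F ⊆ cell (node n) := by
    intro n ω hω
    have : ∀ n, path ω n = node n := by
      intro n
      induction n with
      | zero => rfl
      | succ n ih =>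
        rw [hpath, hnode, ih, ← show U ω = x from hω]
        simp [U, ih]
    rw [← this]
    exact hmem ω n
  have hsplit : ∀ n, c ≤ 2 * min (ν (cell (node n) ∩ D (cell (node n))))
      (ν (cell (node n) \ D (cell (node n)))) := fun n =>
    (min_le_min (measure_mono (inter_subset_inter_left _ (hFn n)))
      (measure_mono (sdiff_subset_sdiff_left (hFn n)))).trans (hD _ B hB)
  have hdec : ∀ n, 2 * ν (cell (node (n + 1))) + c ≤ 2 * ν (cell (node n)) := by
    intro n
    rw [← measure_inter_add_sdiff (cell (node n)) (hDm (cell (node n))), mul_add]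
    rw [hnode, hcell]
    cases x n
    · rw [add_comm]
      simp only [Bool.false_eq_true, if_false]
      gcongr
      exact (hsplit n).trans (mul_le_mul_right (min_le_left _ _) _)
    · simp only [if_true]
      gcongr
      exact (hsplit n).trans (mul_le_mul_right (min_le_right _ _) _)
  have hall : ∀ n : ℕ, n * c ≤ 2 * ν univ := by
    intro n
    have : 2 * ν (cell (node n)) + n * c ≤ 2 * ν univ := by
      induction n with
      | zero => simp [node, cell]
      | succ n ih =>
        refine le_trans ?_ ih
        rw [Nat.cast_succ, add_mul, one_mul, add_comm ((n : ℝ≥0∞) * c) c, ← add_assoc]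
        gcongr
        exact hdec n
    exact le_add_self.trans this
  obtain ⟨n, hn⟩ := ENNReal.exists_nat_mul_gt hc0 (b := 2 * ν univ)
    (ENNReal.mul_ne_top ofNat_ne_top (measure_ne_top _ _))
  exact absurd (hall n) (not_le.2 hn)

/-- Decomposition of a finite measure into countably many atoms and a diffuse part. -/
theorem exists_code_atoms_diffuse {S : Type*} [MeasurableSpace S] (ν : Measure S)
    [IsFiniteMeasure ν] :
    ∃ (U : S → ℕ → Bool) (e : ℕ → ℕ → Bool), Measurable U ∧
      (∀ x, ∀ B, MeasurableSet B → ν (U ⁻¹' {x} ∩ B) = 0 ∨ ν (U ⁻¹' {x} \ B) = 0) ∧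
      NullSingletonClass ((ν.restrict (U ⁻¹' range e)ᶜ).map U) := by
  obtain ⟨U, hU, hat⟩ := exists_code_fibers_atoms ν
  have hD := (Measure.countable_meas_level_set_pos (μ := ν) hU).insert fun _ => true
  obtain ⟨e, he⟩ := hD.exists_eq_range (insert_nonempty _ _)
  refine ⟨U, e, hU, hat, ⟨fun x => ?_⟩⟩
  rw [Measure.map_apply hU (measurableSet_singleton x),
    Measure.restrict_apply (hU (measurableSet_singleton x))]
  by_cases hx : 0 < ν {ω | U ω = x}
  · convert measure_empty (μ := ν)
    refine eq_empty_of_forall_notMem fun ω hω => hω.2 ?_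
    rw [← he]
    have h1 : U ω = x := hω.1
    refine Or.inr ?_
    rw [h1]
    exact hx
  · refine measure_mono_null inter_subset_left ?_
    exact nonpos_iff_eq_zero.1 (not_lt.1 hx)

theorem exists_map_restrict_eq {S Y : Type*} [MeasurableSpace S] [MeasurableSpace Y]
    [StandardBorelSpace Y] [Nonempty Y] {ν : Measure S} [IsFiniteMeasure ν] {U : S → ℕ → Bool}
    (hU : Measurable U) {A : Set S} (h : NullSingletonClass ((ν.restrict A).map U)) (κ : Measure Y)
    [IsFiniteMeasure κ] (hκ : κ univ = ν A) :
    ∃ θ : S → Y, Measurable θ ∧ (ν.restrict A).map θ = κ := by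
  rcases eq_or_ne (ν A) 0 with h0 | h0
  · refine ⟨fun _ => Classical.arbitrary Y, measurable_const, ?_⟩
    rw [h0] at hκ
    rw [Measure.restrict_eq_zero.2 h0, Measure.measure_univ_eq_zero.1 hκ, Measure.map_zero]
  have hA := measure_ne_top ν A
  have h1 : IsProbabilityMeasure ((ν A)⁻¹ • (ν.restrict A).map U) := ⟨by
    rw [Measure.smul_apply, Measure.map_apply hU MeasurableSet.univ, preimage_univ,
      Measure.restrict_apply_univ, smul_eq_mul, ENNReal.inv_mul_cancel h0 hA]⟩
  have h2 : NullSingletonClass ((ν A)⁻¹ • (ν.restrict A).map U) := ⟨fun x => by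
    rw [Measure.smul_apply, measure_singleton, smul_zero]⟩
  have h3 : IsProbabilityMeasure ((ν A)⁻¹ • κ) := ⟨by
    rw [Measure.smul_apply, hκ, smul_eq_mul, ENNReal.inv_mul_cancel h0 hA]⟩
  obtain ⟨θ, hθ, hmap⟩ := exists_map_eq_of_noAtoms ((ν A)⁻¹ • (ν.restrict A).map U) ((ν A)⁻¹ • κ)
  refine ⟨θ ∘ U, hθ.comp hU, ?_⟩
  rw [← Measure.map_map hθ hU]
  have h4 := congrArg (fun m => ν A • m) hmap
  simpa only [Measure.map_smul, smul_smul, ENNReal.mul_inv_cancel h0 hA, one_smul] using h4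

/-- A sequence of functions can be multiplied by independent random signs, up to equality in
law, on a set carrying a diffuse code. -/
theorem exists_random_sign_copy {S Y : Type*} [MeasurableSpace S] [NormedAddCommGroup Y]
    [NormedSpace ℝ Y] [CompleteSpace Y] [SecondCountableTopology Y] [MeasurableSpace Y]
    [BorelSpace Y] {ν : Measure S} [IsFiniteMeasure ν] {U : S → ℕ → Bool}
    (hU : Measurable U) {A : Set S} (hA : MeasurableSet A)
    (h : NullSingletonClass ((ν.restrict A).map U)) {g : ℕ → S → Y} (hg : ∀ n, Measurable (g n)) :
    ∃ k : ℕ → S → Y, (∀ n, Measurable (k n)) ∧ (∀ n, ∀ ω ∉ A, k n ω = 0) ∧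
      (∀ (T : Finset ℕ) (a : ℕ → ℝ), (∀ n, Integrable (g n) ν) →
        ∫ ω, ‖∑ i ∈ T, a i • k i ω‖ ∂ν = ∫ ω in A, signNorm T (fun i => a i • g i ω) ∂ν) ∧
      ∀ W : Set Y, MeasurableSet W → (∀ y, -y ∈ W ↔ y ∈ W) → ∀ n,
        ν (A ∩ k n ⁻¹' Wᶜ) = ν (A ∩ g n ⁻¹' Wᶜ) := by
  have hG : Measurable fun (p : S × (ℕ → Bool)) => ((fun n => g n p.1, p.2) : (ℕ → Y) × (ℕ → Bool)) :=
    (measurable_pi_lambda _ fun n => (hg n).comp measurable_fst).prodMk measurable_snd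
  set κ : Measure ((ℕ → Y) × (ℕ → Bool)) :=
    ((ν.restrict A).prod coinTosses).map fun p => (fun n => g n p.1, p.2) with hκ
  have hκu : κ univ = ν A := by
    rw [hκ, Measure.map_apply hG MeasurableSet.univ, preimage_univ, Measure.prod_apply .univ]
    simp
  obtain ⟨θ, hθ, hmap⟩ := exists_map_restrict_eq hU h κ hκu
  let t : ℕ → (ℕ → Y) × (ℕ → Bool) → Y := fun n p => coinSign (p.2 n) • p.1 n
  have ht : ∀ n, Measurable (t n) := fun n =>
    ((measurable_coinSign n).comp measurable_snd).smul ((measurable_pi_apply n).comp measurable_fst)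
  refine ⟨fun n => A.indicator (t n ∘ θ), fun n => ((ht n).comp hθ).indicator hA,
    fun n ω hω => indicator_of_notMem hω _, fun T a hintg => ?_, fun W hW hsymm n => ?_⟩
  · have h1 : ∀ ω, ‖∑ i ∈ T, a i • A.indicator (t i ∘ θ) ω‖ =
        A.indicator (fun ω => ‖∑ i ∈ T, a i • t i (θ ω)‖) ω := by
      intro ω
      by_cases hω : ω ∈ A <;> simp [hω]
    have h2 : Measurable fun p : (ℕ → Y) × (ℕ → Bool) => ‖∑ i ∈ T, a i • t i p‖ :=
      (Finset.measurable_fun_sum T fun i _ => (ht i).const_smul (a i)).norm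
    have h3 := integrable_prod_signedSum (ν := ν.restrict A) T (f := fun i ω => a i • g i ω)
      (fun i => (hintg i).integrableOn.smul (a i))
    rw [integral_congr_ae (Eventually.of_forall h1), integral_indicator hA,
      ← integral_map (f := fun p => ‖∑ i ∈ T, a i • t i p‖) hθ.aemeasurable
        h2.aestronglyMeasurable, hmap, hκ, integral_map hG.aemeasurable h2.aestronglyMeasurable]
    have h4 : ∀ p : S × (ℕ → Bool), ‖∑ i ∈ T, a i • t i (fun n => g n p.1, p.2)‖ =
        ‖∑ i ∈ T, coinSign (p.2 i) • a i • g i p.1‖ := by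
      intro p
      refine congrArg _ (Finset.sum_congr rfl fun i _ => ?_)
      exact smul_comm _ _ _
    rw [integral_congr_ae (Eventually.of_forall h4), integral_prod _ h3.norm]
    rfl
  · have hs : ∀ (b : Bool) (y : Y), coinSign b • y ∈ W ↔ y ∈ W := by
      intro b y
      cases b <;> simp [coinSign, hsymm]
    have h1 : A ∩ A.indicator (t n ∘ θ) ⁻¹' Wᶜ = θ ⁻¹' (t n ⁻¹' Wᶜ) ∩ A := by
      ext ω
      by_cases hω : ω ∈ A <;> simp [hω]
    have hm : MeasurableSet (t n ⁻¹' Wᶜ) := ht n hW.compl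
    rw [h1, ← Measure.restrict_apply (hθ hm), ← Measure.map_apply hθ hm, hmap, hκ,
      Measure.map_apply hG hm]
    have h2 : (fun p : S × (ℕ → Bool) => ((fun n => g n p.1, p.2) : (ℕ → Y) × (ℕ → Bool))) ⁻¹'
        (t n ⁻¹' Wᶜ) = (g n ⁻¹' Wᶜ) ×ˢ univ := by
      ext p
      simp [t, hs]
    rw [h2, Measure.prod_prod, measure_univ, mul_one, Measure.restrict_apply (hg n hW.compl),
      inter_comm]

theorem IsWeaklyCompact.isClosed {E : Type*} [NormedAddCommGroup E] [NormedSpace ℝ E] {W : Set E}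
    (hW : IsWeaklyCompact W) : IsClosed W := by
  have h := (IsCompact.isClosed hW).preimage (toWeakSpaceCLM ℝ E).continuous
  convert h using 1
  exact (preimage_image_eq W (toWeakSpace ℝ E).injective).symm

theorem IsWeaklyCompact.union {E : Type*} [NormedAddCommGroup E] [NormedSpace ℝ E] {V W : Set E}
    (hV : IsWeaklyCompact V) (hW : IsWeaklyCompact W) : IsWeaklyCompact (V ∪ W) := by
  unfold IsWeaklyCompact
  rw [image_union]
  exact IsCompact.union hV hW

theorem IsWeaklyCompact.neg {E : Type*} [NormedAddCommGroup E] [NormedSpace ℝ E] {W : Set E}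
    (hW : IsWeaklyCompact W) : IsWeaklyCompact (-W) := by
  unfold IsWeaklyCompact
  have : toWeakSpace ℝ E '' (-W) = -(toWeakSpace ℝ E '' W) := by
    rw [← image_neg_eq_neg, ← image_neg_eq_neg, image_image, image_image]
    simp
  rw [this]
  exact IsCompact.neg hW

theorem isWeaklyCompact_singleton {E : Type*} [NormedAddCommGroup E] [NormedSpace ℝ E] (x : E) :
    IsWeaklyCompact {x} := by
  unfold IsWeaklyCompact
  rw [image_singleton]
  exact isCompact_singleton

theorem IsRelWeaklyCompact.exists_isWeaklyCompact {E : Type*} [NormedAddCommGroup E]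
    [NormedSpace ℝ E] {W : Set E} (hW : IsRelWeaklyCompact W) : ∃ V, IsWeaklyCompact V ∧ W ⊆ V := by
  refine ⟨toWeakSpace ℝ E ⁻¹' closure (toWeakSpace ℝ E '' W), ?_, fun x hx =>
    subset_closure (X := WeakSpace ℝ E) (mem_image_of_mem _ hx)⟩
  unfold IsWeaklyCompact
  rw [image_preimage_eq _ (toWeakSpace ℝ E).surjective]
  exact hW

/-- Truncation: the identity on the ball of radius `C`, zero outside. -/
def ballTrunc {E : Type*} [NormedAddCommGroup E] (C : ℝ) (y : E) : E :=
  (Metric.closedBall 0 C).indicator id y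

theorem ballTrunc_of_le {E : Type*} [NormedAddCommGroup E] {C : ℝ} {y : E} (h : ‖y‖ ≤ C) :
    ballTrunc C y = y := indicator_of_mem (mem_closedBall_zero_iff.2 h) _

theorem ballTrunc_of_lt {E : Type*} [NormedAddCommGroup E] {C : ℝ} {y : E} (h : C < ‖y‖) :
    ballTrunc C y = 0 :=
  indicator_of_notMem (fun h' => not_le.2 h (mem_closedBall_zero_iff.1 h')) _

theorem norm_ballTrunc_le {E : Type*} [NormedAddCommGroup E] {C : ℝ} (hC : 0 ≤ C) (y : E) :
    ‖ballTrunc C y‖ ≤ C := by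
  rcases le_or_gt ‖y‖ C with h | h
  · rwa [ballTrunc_of_le h]
  · rwa [ballTrunc_of_lt h, norm_zero]

theorem MeasureTheory.StronglyMeasurable.ballTrunc {S E : Type*} [MeasurableSpace S]
    [NormedAddCommGroup E] {f : S → E} (hf : StronglyMeasurable f) (C : ℝ) :
    StronglyMeasurable fun ω => ballTrunc C (f ω) := by
  have : (fun ω => _root_.ballTrunc C (f ω)) = {ω | ‖f ω‖ ≤ C}.indicator f := by
    ext ω
    by_cases h : ‖f ω‖ ≤ C
    · rw [ballTrunc_of_le h, indicator_of_mem (by exact h)]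
    · rw [ballTrunc_of_lt (not_le.1 h), indicator_of_notMem (by exact h)]
  rw [this]
  exact hf.indicator (hf.norm.measurable measurableSet_Iic)

theorem exists_separable_submodule {S E : Type*} [MeasurableSpace S] [NormedAddCommGroup E]
    [NormedSpace ℝ E] {f : ℕ → S → E} (hf : ∀ n, StronglyMeasurable (f n)) :
    ∃ M : Submodule ℝ E, IsClosed (M : Set E) ∧ SecondCountableTopology M ∧ ∀ n ω, f n ω ∈ M := by
  have hs : TopologicalSpace.IsSeparable (⋃ n, range (f n)) :=
    TopologicalSpace.IsSeparable.iUnion fun n => (hf n).isSeparable_range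
  refine ⟨(Submodule.span ℝ (⋃ n, range (f n))).topologicalClosure,
    Submodule.isClosed_topologicalClosure _, ?_, fun n ω => ?_⟩
  · have h : TopologicalSpace.IsSeparable
        ((Submodule.span ℝ (⋃ n, range (f n))).topologicalClosure : Set E) := by
      rw [Submodule.topologicalClosure_coe]
      exact (hs.span (R := ℝ)).closure
    have := h.separableSpace
    exact UniformSpace.secondCountable_of_separable _
  · exact Submodule.le_topologicalClosure _
      (Submodule.subset_span (mem_iUnion.2 ⟨n, mem_range_self ω⟩))

theorem measure_compl_le_of_one_sub_le {S : Type*} [MeasurableSpace S] {ν : Measure S}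
    [IsProbabilityMeasure ν] {B : Set S} (hB : MeasurableSet B) {δ : ℝ≥0∞} (h : 1 - δ ≤ ν B) :
    ν Bᶜ ≤ δ := by
  rw [prob_compl_eq_one_sub hB]
  exact tsub_le_iff_tsub_le.1 h

theorem one_sub_le_of_measure_compl_le {S : Type*} [MeasurableSpace S] {ν : Measure S}
    [IsProbabilityMeasure ν] {B : Set S} {δ : ℝ≥0∞} (h : ν Bᶜ ≤ δ) :
    1 - δ ≤ ν B := by
  rw [tsub_le_iff_right, ← measure_univ (μ := ν), ← union_compl_self B]
  exact (measure_union_le _ _).trans (by gcongr)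

/-- On a diffuse part of the space, truncations of a weakly convergent sequence inherit tightness
from bounded relatively weakly compact sets. -/
theorem exists_tight_diffuse {S E : Type*} [MeasurableSpace S] [NormedAddCommGroup E]
    [NormedSpace ℝ E] [CompleteSpace E] {ν : Measure S} [IsProbabilityMeasure ν]
    (H : ∀ K : Set (Lp E 1 ν), (∃ C : ℝ, ∀ f ∈ K, ∀ᵐ ω ∂ν, ‖f ω‖ ≤ C) →
      IsRelWeaklyCompact K → IsDeltaSSet ν K)
    {U : S → ℕ → Bool} (hU : Measurable U) {A : Set S} (hA : MeasurableSet A)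
    (h : NullSingletonClass ((ν.restrict A).map U)) {f : ℕ → Lp E 1 ν} {x : Lp E 1 ν}
    (hf : WTendsto f atTop x) {C : ℝ} (hC : 0 ≤ C) {δ : ℝ} (hδ : 0 < δ) :
    ∃ W : Set E, IsWeaklyCompact W ∧
      ∀ n, ν (A ∩ {ω | ballTrunc C (f n ω) ∉ W}) ≤ ENNReal.ofReal δ := by
  have hfm : ∀ n, StronglyMeasurable fun ω => ballTrunc C (f n ω) := fun n =>
    (Lp.stronglyMeasurable (f n)).ballTrunc C
  obtain ⟨M, hMc, hM2, hfM⟩ := exists_separable_submodule hfm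
  have : CompleteSpace M := hMc.completeSpace_coe
  borelize E
  let g : ℕ → S → M := fun n ω => ⟨ballTrunc C (f n ω), hfM n ω⟩
  have hgm : ∀ n, Measurable (g n) := fun n => (hfm n).measurable.subtype_mk
  have hgC : ∀ n ω, ‖g n ω‖ ≤ C := fun n ω => norm_ballTrunc_le hC _
  have hgi : ∀ n, Integrable (g n) ν := fun n =>
    Integrable.of_bound (hgm n).aestronglyMeasurable C (Eventually.of_forall (hgC n))
  obtain ⟨k, hkm, hk0, hknorm, hklaw⟩ := exists_random_sign_copy hU hA h hgm
  have hkC : ∀ n, ∀ᵐ ω ∂ν, ‖k n ω‖ ≤ C := by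
    intro n
    have h1 := hklaw (Metric.closedBall 0 C) Metric.isClosed_closedBall.measurableSet
      (fun y => by simp) n
    have h2 : A ∩ g n ⁻¹' (Metric.closedBall 0 C)ᶜ = ∅ := by
      refine eq_empty_of_forall_notMem fun ω hω => hω.2 ?_
      exact mem_closedBall_zero_iff.2 (hgC n ω)
    rw [h2, measure_empty] at h1
    refine measure_mono_null (fun ω hω => ?_) h1
    by_cases hωA : ω ∈ A
    · exact ⟨hωA, fun h' => hω (mem_closedBall_zero_iff.1 h')⟩
    · refine absurd ?_ hω
      change ‖k n ω‖ ≤ C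
      rwa [hk0 n ω hωA, norm_zero]
  have hkm' : ∀ n, StronglyMeasurable fun ω => (k n ω : E) := fun n =>
    continuous_subtype_val.comp_stronglyMeasurable (hkm n).stronglyMeasurable
  have hki : ∀ n, Integrable (fun ω => (k n ω : E)) ν := fun n =>
    Integrable.of_bound (hkm' n).aestronglyMeasurable C (hkC n)
  have hae : ∀ᵐ ω ∂ν, ∀ n, (hki n).toL1 _ ω = (k n ω : E) :=
    ae_all_iff.2 fun n => Integrable.coeFn_toL1 (hki n)
  have hweak : WTendsto (fun n => (hki n).toL1 _) atTop 0 := by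
    refine hf.of_coinSign_sum_le fun a => ?_
    have hintg : ∀ i, Integrable (fun ω => a i • f i ω) ν :=
      fun i => Integrable.smul (a i) (L1.integrable_coeFn (f i))
    have h1 : ‖a.sum fun i r => r • (hki i).toL1 _‖ = ∫ ω, ‖∑ i ∈ a.support, a i • k i ω‖ ∂ν := by
      rw [L1.norm_eq_integral_norm]
      refine integral_congr_ae ?_
      filter_upwards [hae, coeFn_finsupp_sum a fun n => (hki n).toL1 _] with ω h1 h2
      rw [h2, ← Submodule.norm_coe, Submodule.coe_sum]
      refine congrArg _ (Finset.sum_congr rfl fun i _ => ?_)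
      rw [h1, Submodule.coe_smul]
    rw [h1, hknorm _ _ hgi, integral_norm_signedSum]
    refine le_trans ?_ (setIntegral_le_integral (s := A) (integrable_signNorm a.support hintg)
      (Eventually.of_forall fun ω => signNorm_nonneg _ _))
    refine integral_mono (integrable_signNorm a.support
      fun i => (Integrable.smul (a i) (hgi i)).integrableOn)
      (integrable_signNorm a.support hintg).integrableOn fun ω => ?_
    refine le_trans (le_of_eq ?_) (signNorm_indicator_le a.support (fun i => a i • f i ω)
      {i | ‖f i ω‖ ≤ C})
    refine integral_congr_ae (Eventually.of_forall fun s => ?_)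
    change ‖∑ i ∈ a.support, coinSign (s i) • a i • g i ω‖ = _
    rw [← Submodule.norm_coe, Submodule.coe_sum]
    refine congrArg _ (Finset.sum_congr rfl fun i _ => ?_)
    rw [Submodule.coe_smul, Submodule.coe_smul]
    congr 1
    change a i • ballTrunc C (f i ω) = _
    by_cases hi : ‖f i ω‖ ≤ C
    · rw [ballTrunc_of_le hi, indicator_of_mem (by exact hi)]
    · rw [ballTrunc_of_lt (not_le.1 hi), indicator_of_notMem (by exact hi), smul_zero]
  obtain ⟨-, hS⟩ := H (range fun n => (hki n).toL1 _) ⟨C, by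
    rintro _ ⟨n, rfl⟩
    filter_upwards [hae, hkC n] with ω h1 h2
    rw [h1]
    exact h2⟩ (isRelWeaklyCompact_range hweak)
  obtain ⟨W, hW, hWm⟩ := hS δ hδ
  have hW' := hW.union hW.neg
  refine ⟨W ∪ -W, hW', fun n => ?_⟩
  have h1 := hklaw (Subtype.val ⁻¹' (W ∪ -W))
    (hW'.isClosed.preimage continuous_subtype_val).measurableSet
    (fun y => by simp [or_comm]) n
  refine le_trans (le_of_eq ?_) (le_trans (le_of_eq h1.symm) ?_)
  · rfl
  · refine le_trans ?_ (measure_compl_le_of_one_sub_le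
      ((Lp.stronglyMeasurable ((hki n).toL1 _)).measurable hW.isClosed.measurableSet)
      (hWm _ (mem_range_self n)))
    refine measure_mono_ae ?_
    filter_upwards [hae] with ω hω hω'
    refine fun h' => hω'.2 (Or.inl ?_)
    have : (hki n).toL1 _ ω ∈ W := h'
    rwa [hω] at this

/-- A measurable function is constant on an atom. -/
theorem MeasureTheory.StronglyMeasurable.exists_ae_const_of_atom {S E : Type*} [MeasurableSpace S]
    [NormedAddCommGroup E] [NormedSpace ℝ E] {ν : Measure S} {B : Set S}
    (hB : ∀ D, MeasurableSet D → ν (B ∩ D) = 0 ∨ ν (B \ D) = 0)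
    (hBm : MeasurableSet B) {f : S → E} (hf : StronglyMeasurable f) :
    ∃ c, ∀ᵐ ω ∂ν.restrict B, f ω = c := by
  obtain ⟨M, -, hM2, hfM⟩ := exists_separable_submodule (f := fun _ : ℕ => f) fun _ => hf
  borelize E
  let g : S → M := fun ω => ⟨f ω, hfM 0 ω⟩
  have hg : Measurable g := hf.measurable.subtype_mk
  obtain ⟨c, hc⟩ := Filter.exists_eventuallyEq_const_of_forall_separating (f := g)
    (l := ae (ν.restrict B)) MeasurableSet (fun D hD => by
      have hgD := hg hD
      rcases hB _ hgD with h | h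
      · refine Or.inr ?_
        rw [ae_iff, Measure.restrict_apply' hBm]
        have h2 : {a | ¬g a ∉ D} ∩ B = B ∩ g ⁻¹' D := by
          ext; simp [and_comm]
        rw [h2]
        exact h
      · refine Or.inl ?_
        rw [ae_iff, Measure.restrict_apply' hBm]
        have h2 : {a | g a ∉ D} ∩ B = B \ g ⁻¹' D := by
          ext; simp [and_comm]
        rw [h2]
        exact h)
  refine ⟨c, ?_⟩
  filter_upwards [hc] with ω hω
  exact congrArg Subtype.val hω

/-- Integration over a set as a continuous linear map on `L¹`. -/
theorem exists_clm_setIntegral {S : Type*} (E : Type*) [MeasurableSpace S] [NormedAddCommGroup E]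
    [NormedSpace ℝ E] [CompleteSpace E] (ν : Measure S) (B : Set S) :
    ∃ T : Lp E 1 ν →L[ℝ] E, ∀ f, T f = ∫ ω in B, f ω ∂ν := by
  refine ⟨(L1.integralCLM (E := E) (μ := ν.restrict B)).comp (LpToLpRestrictCLM S E ℝ ν 1 B),
    fun f => ?_⟩
  rw [ContinuousLinearMap.comp_apply, ← L1.integral_eq, L1.integral_eq_integral]
  exact integral_congr_ae (LpToLpRestrictCLM_coeFn ℝ B f)

theorem exists_tight_atom {S E : Type*} [MeasurableSpace S] [NormedAddCommGroup E]
    [NormedSpace ℝ E] [CompleteSpace E] {ν : Measure S} [IsFiniteMeasure ν] {B : Set S}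
    (hB : ∀ D, MeasurableSet D → ν (B ∩ D) = 0 ∨ ν (B \ D) = 0)
    (hBm : MeasurableSet B) {f : ℕ → Lp E 1 ν} {x : Lp E 1 ν} (hf : WTendsto f atTop x) (C : ℝ) :
    ∃ W : Set E, IsWeaklyCompact W ∧ ∀ n, ν (B ∩ {ω | ballTrunc C (f n ω) ∉ W}) = 0 := by
  rcases eq_or_ne (ν B) 0 with h0 | h0
  · exact ⟨{0}, isWeaklyCompact_singleton 0, fun n => measure_mono_null inter_subset_left h0⟩
  have hr : ν.real B ≠ 0 := by
    rw [measureReal_def]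
    exact (ENNReal.toReal_pos h0 (measure_ne_top _ _)).ne'
  obtain ⟨T, hT⟩ := exists_clm_setIntegral E ν B
  obtain ⟨V, hV, hVm⟩ := (isRelWeaklyCompact_range
    (hf.map ((ν.real B)⁻¹ • T))).exists_isWeaklyCompact
  refine ⟨V ∪ {0}, hV.union (isWeaklyCompact_singleton 0), fun n => ?_⟩
  obtain ⟨c, hc⟩ := (Lp.stronglyMeasurable (f n)).exists_ae_const_of_atom hB hBm
  have hcV : c ∈ V := by
    refine hVm ⟨n, ?_⟩
    change (ν.real B)⁻¹ • T (f n) = c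
    rw [hT, integral_congr_ae hc, setIntegral_const, smul_smul, inv_mul_cancel₀ hr, one_smul]
  have h2 : ∀ᵐ ω ∂ν.restrict B, ballTrunc C (f n ω) ∈ V ∪ {0} := by
    filter_upwards [hc] with ω hω
    rcases le_or_gt ‖f n ω‖ C with h | h
    · rw [ballTrunc_of_le h, hω]
      exact Or.inl hcV
    · rw [ballTrunc_of_lt h]
      exact Or.inr rfl
  rw [ae_iff, Measure.restrict_apply' hBm, inter_comm] at h2
  exact h2

theorem exists_tight_biUnion {S E ι : Type*} [MeasurableSpace S] [NormedAddCommGroup E]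
    [NormedSpace ℝ E] {ν : Measure S} {B : ι → Set S} {u : ℕ → S → E}
    (h : ∀ i, ∃ W : Set E, IsWeaklyCompact W ∧ ∀ n, ν (B i ∩ {ω | u n ω ∉ W}) = 0) (T : Finset ι) :
    ∃ W : Set E, IsWeaklyCompact W ∧ ∀ n, ν ((⋃ i ∈ T, B i) ∩ {ω | u n ω ∉ W}) = 0 := by
  classical
  choose W hW hWn using h
  refine ⟨⋃ i ∈ T, W i, ?_, fun n => ?_⟩
  · unfold IsWeaklyCompact
    simp only [image_iUnion]
    exact T.isCompact_biUnion fun i _ => hW i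
  · rw [iUnion₂_inter]
    refine (measure_biUnion_null_iff T.countable_toSet).2 fun i hi => ?_
    refine measure_mono_null ?_ (hWn i n)
    exact inter_subset_inter_right _ fun ω hω h' => hω (mem_biUnion hi h')

theorem exists_measure_iUnion_diff_lt {S : Type*} [MeasurableSpace S] {ν : Measure S}
    [IsFiniteMeasure ν] {B : ℕ → Set S} (hB : ∀ i, MeasurableSet (B i)) {ε : ℝ≥0∞} (hε : 0 < ε) :
    ∃ N, ν ((⋃ i, B i) \ ⋃ i ∈ Finset.range N, B i) < ε := by
  have h1 := tendsto_measure_iInter_atTop (μ := ν)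
    (s := fun n => (⋃ i, B i) \ ⋃ i ∈ Finset.range n, B i)
    (fun n => ((MeasurableSet.iUnion hB).diff
      (Finset.measurableSet_biUnion _ fun i _ => hB i)).nullMeasurableSet)
    (fun m n hmn => sdiff_subset_sdiff_right (biUnion_subset_biUnion_left
      (by exact_mod_cast Finset.range_mono hmn)))
    ⟨0, measure_ne_top _ _⟩
  have h2 : ⋂ n, ((⋃ i, B i) \ ⋃ i ∈ Finset.range n, B i) = ∅ := by
    refine eq_empty_of_forall_notMem fun ω hω => ?_
    obtain ⟨i, hi⟩ := mem_iUnion.1 (mem_iInter.1 hω 0).1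
    refine (mem_iInter.1 hω (i + 1)).2 ?_
    exact mem_biUnion (Finset.mem_coe.2 (Finset.mem_range.2 i.lt_succ_self)) hi
  rw [h2, measure_empty] at h1
  exact (h1.eventually (gt_mem_nhds hε)).exists

/-- Truncations of a weakly convergent sequence are tight if every bounded relatively weakly
compact set is. -/
theorem exists_tight {S E : Type*} [MeasurableSpace S] [NormedAddCommGroup E]
    [NormedSpace ℝ E] [CompleteSpace E] {ν : Measure S} [IsProbabilityMeasure ν]
    (H : ∀ K : Set (Lp E 1 ν), (∃ C : ℝ, ∀ f ∈ K, ∀ᵐ ω ∂ν, ‖f ω‖ ≤ C) →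
      IsRelWeaklyCompact K → IsDeltaSSet ν K)
    {f : ℕ → Lp E 1 ν} {x : Lp E 1 ν}
    (hf : WTendsto f atTop x) {C : ℝ} (hC : 0 ≤ C) {δ : ℝ} (hδ : 0 < δ) :
    ∃ W : Set E, IsWeaklyCompact W ∧
      ∀ n, ν {ω | ballTrunc C (f n ω) ∉ W} ≤ ENNReal.ofReal δ := by
  obtain ⟨U, e, hU, hat, hns⟩ := exists_code_atoms_diffuse ν
  have hem : MeasurableSet (range e) := (countable_range e).measurableSet
  obtain ⟨V, hV, hVn⟩ := exists_tight_diffuse H hU (hU hem).compl hns hf hC (half_pos hδ)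
  have hBm : ∀ i, MeasurableSet (U ⁻¹' {e i}) := fun i => hU (measurableSet_singleton _)
  obtain ⟨N, hN⟩ := exists_measure_iUnion_diff_lt (ν := ν) hBm
    (ENNReal.ofReal_pos.2 (half_pos hδ))
  have hUe : ⋃ i, U ⁻¹' {e i} = U ⁻¹' range e := by
    rw [← preimage_iUnion, iUnion_singleton_eq_range]
  rw [hUe] at hN
  obtain ⟨W, hW, hWn⟩ := exists_tight_biUnion (u := fun n ω => ballTrunc C (f n ω))
    (fun i => exists_tight_atom (fun D hD => hat (e i) D hD) (hBm i) hf C) (Finset.range N)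
  refine ⟨V ∪ W, hV.union hW, fun n => ?_⟩
  have hsub : {ω | ballTrunc C (f n ω) ∉ V ∪ W} ⊆
      ((U ⁻¹' range e)ᶜ ∩ {ω | ballTrunc C (f n ω) ∉ V}) ∪
      ((U ⁻¹' range e \ ⋃ i ∈ Finset.range N, U ⁻¹' {e i}) ∪
      ((⋃ i ∈ Finset.range N, U ⁻¹' {e i}) ∩ {ω | ballTrunc C (f n ω) ∉ W})) := by
    intro ω hω
    have h1 : ballTrunc C (f n ω) ∉ V := fun h => hω (Or.inl h)
    have h2 : ballTrunc C (f n ω) ∉ W := fun h => hω (Or.inr h)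
    by_cases h3 : ω ∈ U ⁻¹' range e
    · by_cases h4 : ω ∈ ⋃ i ∈ Finset.range N, U ⁻¹' {e i}
      · exact Or.inr (Or.inr ⟨h4, h2⟩)
      · exact Or.inr (Or.inl ⟨h3, h4⟩)
    · exact Or.inl ⟨h3, h1⟩
  refine (measure_mono hsub).trans ((measure_union_le _ _).trans ?_)
  have h5 := (measure_union_le (μ := ν) (U ⁻¹' range e \ ⋃ i ∈ Finset.range N, U ⁻¹' {e i})
    ((⋃ i ∈ Finset.range N, U ⁻¹' {e i}) ∩ {ω | ballTrunc C (f n ω) ∉ W}))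
  rw [hWn n, add_zero] at h5
  refine (add_le_add (hVn n) (h5.trans hN.le)).trans ?_
  rw [← ENNReal.ofReal_add (half_pos hδ).le (half_pos hδ).le, add_halves]

theorem exists_injective_functionals {Y : Type*} [NormedAddCommGroup Y] [NormedSpace ℝ Y]
    [SecondCountableTopology Y] :
    ∃ x : ℕ → StrongDual ℝ Y, Function.Injective fun y k => x k y := by
  obtain ⟨x, -, hx⟩ := exists_total_seq (E := Y) (TopologicalSpace.IsSeparable.of_separableSpace univ)
  refine ⟨x, fun y z h => ?_⟩
  rw [← sub_eq_zero]
  refine hx _ (mem_univ _) fun k => ?_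
  rw [map_sub, sub_eq_zero]
  exact congrFun h k

theorem measurableEmbedding_functionals {Y ι : Type*} [Countable ι] [NormedAddCommGroup Y]
    [NormedSpace ℝ Y] [CompleteSpace Y] [SecondCountableTopology Y] [MeasurableSpace Y]
    [BorelSpace Y] {x : ι → StrongDual ℝ Y} (hx : Function.Injective fun y k => x k y) :
    MeasurableEmbedding fun y k => x k y :=
  Continuous.measurableEmbedding (by fun_prop) hx

/-- Krein's theorem in separable Banach spaces. -/
theorem IsWeaklyCompact.exists_convex {Y : Type*} [NormedAddCommGroup Y] [NormedSpace ℝ Y]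
    [CompleteSpace Y] [SecondCountableTopology Y] {W : Set Y} (hW : IsWeaklyCompact W) :
    ∃ V, IsWeaklyCompact V ∧ Convex ℝ V ∧ W ⊆ V := by
  borelize Y
  let K : Type _ := toWeakSpace ℝ Y '' W
  have : T2Space K := inferInstanceAs (T2Space (toWeakSpace ℝ Y '' W))
  have : CompactSpace K := isCompact_iff_compactSpace.1 hW
  borelize K
  let i : K → Y := fun k => (toWeakSpace ℝ Y).symm k
  have hi : ∀ φ : StrongDual ℝ Y, Continuous fun k => φ (i k) := fun φ =>
    (continuous_weakSpace_eval φ).comp continuous_subtype_val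
  obtain ⟨x, hx⟩ := exists_injective_functionals (Y := Y)
  have him : Measurable i := by
    rw [← (measurableEmbedding_functionals hx).measurable_comp_iff]
    exact measurable_pi_lambda _ fun k => (hi (x k)).measurable
  obtain ⟨C, hC⟩ := (show IsRelWeaklyCompact W from IsCompact.closure hW).exists_norm_le
  have hiC : ∀ k, ‖i k‖ ≤ C := by
    rintro ⟨_, w, hw, rfl⟩
    simpa [i] using hC w hw
  have hintg : ∀ m : Measure K, IsFiniteMeasure m → Integrable i m := fun m _ =>
    Integrable.of_bound him.aestronglyMeasurable C (Eventually.of_forall hiC)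
  let b : ProbabilityMeasure K → Y := fun m => ∫ k, i k ∂(m : Measure K)
  have hφb : ∀ (φ : StrongDual ℝ Y) m, φ (b m) = ∫ k, φ (i k) ∂(m : Measure K) := fun φ m =>
    (φ.integral_comp_comm (hintg _ inferInstance)).symm
  have hb : Continuous fun m => toWeakSpace ℝ Y (b m) := by
    refine continuous_iff_continuousAt.2 fun m => wtendsto_iff.1 fun φ => ?_
    have h := (ProbabilityMeasure.continuous_integral_boundedContinuousFunction
      (BoundedContinuousFunction.mkOfCompact ⟨_, hi φ⟩)).tendsto m
    simp only [hφb]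
    exact h
  refine ⟨range b, ?_, ?_, fun w hw => ?_⟩
  · unfold IsWeaklyCompact
    rw [← range_comp]
    exact isCompact_range hb
  · rintro _ ⟨m, rfl⟩ _ ⟨n, rfl⟩ s t hs ht hst
    have hp : IsProbabilityMeasure
        (ENNReal.ofReal s • (m : Measure K) + ENNReal.ofReal t • (n : Measure K)) := ⟨by
      simp [← ENNReal.ofReal_add hs ht, hst]⟩
    refine ⟨⟨_, hp⟩, ?_⟩
    change ∫ k, i k ∂(ENNReal.ofReal s • (m : Measure K) + ENNReal.ofReal t • (n : Measure K)) = _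
    rw [integral_add_measure ((hintg _ inferInstance).smul_measure ENNReal.ofReal_ne_top)
      ((hintg _ inferInstance).smul_measure ENNReal.ofReal_ne_top), integral_smul_measure,
      integral_smul_measure, ENNReal.toReal_ofReal hs, ENNReal.toReal_ofReal ht]
  · let k : K := ⟨toWeakSpace ℝ Y w, w, hw, rfl⟩
    refine ⟨⟨Measure.dirac k, inferInstance⟩, ?_⟩
    change ∫ k, i k ∂(Measure.dirac k) = w
    rw [integral_dirac]
    simp [i, k]

/-- A point of `V` can be prescribed through its coordinates, as soon as no rational
combination of the coordinates separates. -/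
theorem exists_mem_of_rat_separation {Y ι : Type*} [NormedAddCommGroup Y] [NormedSpace ℝ Y]
    {V : Set Y} (hV : IsWeaklyCompact V) (hc : Convex ℝ V) (hne : V.Nonempty)
    (x : ι → StrongDual ℝ Y) (c : ι → ℝ)
    (h : ∀ (T : Finset ι) (q : T → ℚ),
      ∑ i, (q i : ℝ) * c i ≤ sSup ((fun v => ∑ i, (q i : ℝ) * x i v) '' V)) :
    ∃ y ∈ V, ∀ i, x i y = c i := by
  classical
  have hclosed : ∀ i, IsClosed {w : WeakSpace ℝ Y | x i ((toWeakSpace ℝ Y).symm w) = c i} :=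
    fun i => isClosed_eq (continuous_weakSpace_eval _) continuous_const
  obtain ⟨w, ⟨y, hy, rfl⟩, hyw⟩ := IsCompact.inter_iInter_nonempty hV _ hclosed fun T => by
    let J : WeakSpace ℝ Y → T → ℝ := fun w i => x i ((toWeakSpace ℝ Y).symm w)
    have hJ : Continuous J := continuous_pi fun i => continuous_weakSpace_eval _
    have hcomp : IsCompact (J '' (toWeakSpace ℝ Y '' V)) := IsCompact.image hV hJ
    have hJV : J '' (toWeakSpace ℝ Y '' V) = (fun (v : Y) (i : T) => x i v) '' V := by
      rw [image_image]
      simp [J]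
    rw [hJV] at hcomp
    have hconv : Convex ℝ ((fun (v : Y) (i : T) => x i v) '' V) :=
      hc.linear_image (LinearMap.pi fun i : T => (x i : Y →ₗ[ℝ] ℝ))
    by_cases hmem : (fun i : T => c i) ∈ (fun (v : Y) (i : T) => x i v) '' V
    · obtain ⟨v, hv, hvc⟩ := hmem
      refine ⟨toWeakSpace ℝ Y v, ⟨v, hv, rfl⟩, mem_iInter₂.2 fun i hi => ?_⟩
      simpa using congrFun hvc ⟨i, hi⟩
    · exfalso
      obtain ⟨f, u, hu, huc⟩ := geometric_hahn_banach_closed_point hconv hcomp.isClosed hmem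
      have hf : ∀ z : T → ℝ, f z = ∑ i, f (Pi.single i 1) * z i := fun z => by
        conv_lhs => rw [← Finset.univ_sum_single z, map_sum]
        refine Finset.sum_congr rfl fun i _ => ?_
        rw [mul_comm, ← smul_eq_mul (z i), ← map_smul, ← Pi.single_smul]
        simp
      have hle := le_of_rat_combinations (ι := T) (F := fun a => ∑ i, a i * c i)
        (G := fun a => sSup ((fun z : T → ℝ => ∑ i, a i * z i) ''
          ((fun (v : Y) (i : T) => x i v) '' V))) (by fun_prop)
        (hcomp.continuous_sSup (by fun_prop)) (fun q => by
          have := h T q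
          rwa [image_image]) fun i => f (Pi.single i 1)
      simp only [← hf] at hle
      have h2 : sSup ((fun z => f z) '' ((fun (v : Y) (i : T) => x i v) '' V)) ≤ u := by
        refine csSup_le ((hne.image _).image _) ?_
        rintro _ ⟨z, hz, rfl⟩
        exact (hu z hz).le
      have h3 := hf fun i : T => c i
      linarith
  refine ⟨y, hy, fun i => ?_⟩
  simpa using mem_iInter.1 hyw i

/-- A countable family of functionals separating points and uniformly dense on a weakly compact
set, together with a countable weakly dense subset. -/
theorem IsWeaklyCompact.exists_dense_functionals {Y : Type*} [NormedAddCommGroup Y]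
    [NormedSpace ℝ Y] [SecondCountableTopology Y] {V : Set Y} (hV : IsWeaklyCompact V) :
    ∃ (z : ℕ → StrongDual ℝ Y) (D : Set Y), Function.Injective (fun y k => z k y) ∧
      (∀ φ : StrongDual ℝ Y, ∀ ε : ℝ, 0 < ε → ∃ k, ∀ v ∈ V, |φ v - z k v| ≤ ε) ∧
      D.Countable ∧ D ⊆ V ∧
      ∀ φ : StrongDual ℝ Y, ∀ ε : ℝ, (∀ v ∈ D, |φ v| ≤ ε) → ∀ v ∈ V, |φ v| ≤ ε := by
  let K : Type _ := toWeakSpace ℝ Y '' V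
  have : CompactSpace K := isCompact_iff_compactSpace.1 hV
  let i : K → Y := fun k => (toWeakSpace ℝ Y).symm k
  have hi : ∀ φ : StrongDual ℝ Y, Continuous fun k => φ (i k) := fun φ =>
    (continuous_weakSpace_eval φ).comp continuous_subtype_val
  have hii : Function.Injective i := fun a b h =>
    Subtype.ext ((toWeakSpace ℝ Y).symm.injective h)
  have hiV : ∀ k, i k ∈ V := by
    rintro ⟨_, w, hw, rfl⟩
    simpa [i] using hw
  obtain ⟨x, hx⟩ := exists_injective_functionals (Y := Y)
  have hJ : Continuous fun (k : K) n => x n (i k) := continuous_pi fun n => hi (x n)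
  have hK2 : SecondCountableTopology K :=
    (hJ.isClosedEmbedding (hx.comp hii)).isEmbedding.secondCountableTopology
  let R : StrongDual ℝ Y → C(K, ℝ) := fun φ => ⟨_, hi φ⟩
  have hne : Nonempty (range R) := ⟨⟨R 0, mem_range_self 0⟩⟩
  choose y hy using fun n => (TopologicalSpace.denseSeq (range R) n).2
  obtain ⟨D, hDc, hDd⟩ := TopologicalSpace.exists_countable_dense K
  let z : ℕ ⊕ ℕ → StrongDual ℝ Y := Sum.elim x y
  refine ⟨fun k => z ((Denumerable.eqv (ℕ ⊕ ℕ)).symm k),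
    i '' D, fun a b hab => hx ?_, fun φ ε hε => ?_, hDc.image i, ?_,
    fun φ ε h v hv => ?_⟩
  · funext n
    have := congrFun hab (Denumerable.eqv (ℕ ⊕ ℕ) (Sum.inl n))
    simpa [z] using this
  · obtain ⟨n, hn⟩ := (TopologicalSpace.denseRange_denseSeq (range R)).exists_dist_lt
      ⟨R φ, mem_range_self φ⟩ hε
    refine ⟨Denumerable.eqv (ℕ ⊕ ℕ) (Sum.inr n), fun v hv => ?_⟩
    have h1 : dist (R φ) (R (y n)) < ε := by
      rw [hy n]
      exact hn
    have h2 := (ContinuousMap.dist_apply_le_dist (f := R φ) (g := R (y n))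
      ⟨toWeakSpace ℝ Y v, v, hv, rfl⟩).trans h1.le
    rw [Real.dist_eq] at h2
    simpa [R, i, z] using h2
  · rintro _ ⟨k, -, rfl⟩
    exact hiV k
  · have hcl : IsClosed {k | |φ (i k)| ≤ ε} := isClosed_le (hi φ).abs continuous_const
    have hsub := hcl.closure_subset_iff.2 fun k hk => h (i k) ⟨k, hk, rfl⟩
    rw [hDd.closure_eq] at hsub
    have h3 : |φ (i ⟨toWeakSpace ℝ Y v, v, hv, rfl⟩)| ≤ ε := hsub (mem_univ _)
    simpa [i] using h3

/-- Bounded sequences of functions have weak limits along ultrafilters. -/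
theorem exists_ultrafilter_limit_of_bound {S : Type*} [MeasurableSpace S] {ν : Measure S}
    [IsFiniteMeasure ν] {h : ℕ → S → ℝ} (hm : ∀ n, AEStronglyMeasurable (h n) ν) {C : ℝ}
    (hC0 : 0 ≤ C) (hC : ∀ n ω, ‖h n ω‖ ≤ C) (U : Ultrafilter ℕ) :
    ∃ η : S → ℝ, Measurable η ∧ Integrable η ν ∧ ∀ B, MeasurableSet B →
      Tendsto (fun n => ∫ ω in B, h n ω ∂ν) U (𝓝 (∫ ω in B, η ω ∂ν)) := by
  have hL : ∀ n, MemLp (h n) 2 ν := fun n => MemLp.of_bound (hm n) C (Eventually.of_forall (hC n))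
  obtain ⟨w, hw⟩ := hilbert_ultrafilter_weak_limit (fun n => (hL n).toLp _)
    (ν.real univ ^ ((2 : ℝ≥0∞).toReal⁻¹) * C) (fun n => by
      refine Lp.norm_le_of_ae_bound hC0 ?_
      filter_upwards [(hL n).coeFn_toLp] with ω hω
      rw [hω]
      exact hC n ω) U
  refine ⟨w, (Lp.stronglyMeasurable w).measurable, (Lp.memLp w).integrable one_le_two,
    fun B hB => ?_⟩
  have h1 := hw (indicatorConstLp 2 hB (measure_ne_top ν B) 1)
  simp only [real_inner_comm (indicatorConstLp 2 hB (measure_ne_top ν B) (1 : ℝ)),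
    L2.inner_indicatorConstLp_one] at h1
  convert h1 using 2 with n
  exact integral_congr_ae (ae_restrict_of_ae (hL n).coeFn_toLp.symm)

theorem bddAbove_rat_combination {Y : Type*} [NormedAddCommGroup Y] [NormedSpace ℝ Y] {V : Set Y}
    {C : ℝ} (hC : ∀ v ∈ V, ‖v‖ ≤ C) (φ : StrongDual ℝ Y) : BddAbove ((fun v => φ v) '' V) := by
  refine ⟨‖φ‖ * C, ?_⟩
  rintro _ ⟨v, hv, rfl⟩
  exact (le_abs_self _).trans (φ.le_of_opNorm_le_of_le le_rfl (hC v hv))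

/-- A sequence with values in a convex weakly compact set has a limit along an ultrafilter, in
the sense of convergence of the integrals of countably many coordinates. -/
theorem exists_ultrafilter_selection {S Y : Type*} [MeasurableSpace S] {ν : Measure S}
    [IsFiniteMeasure ν] [NormedAddCommGroup Y] [NormedSpace ℝ Y] [CompleteSpace Y]
    [SecondCountableTopology Y] {V : Set Y} (hV : IsWeaklyCompact V) (hc : Convex ℝ V)
    (hne : V.Nonempty) {C : ℝ} (hC : ∀ v ∈ V, ‖v‖ ≤ C) {g : ℕ → S → Y}
    (hg : ∀ n, StronglyMeasurable (g n)) (hgV : ∀ n ω, g n ω ∈ V) {z : ℕ → StrongDual ℝ Y}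
    (hz : Function.Injective fun y k => z k y) (U : Ultrafilter ℕ) :
    ∃ G : S → Y, AEStronglyMeasurable G ν ∧ (∀ ω, G ω ∈ V) ∧ ∀ k B, MeasurableSet B →
      Tendsto (fun n => ∫ ω in B, z k (g n ω) ∂ν) U (𝓝 (∫ ω in B, z k (G ω) ∂ν)) := by
  classical
  have hC0 : 0 ≤ C := (norm_nonneg _).trans (hC _ hne.some_mem)
  have hzm : ∀ k n, AEStronglyMeasurable (fun ω => z k (g n ω)) ν := fun k n =>
    ((z k).continuous.comp_stronglyMeasurable (hg n)).aestronglyMeasurable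
  have hzC : ∀ k n ω, ‖z k (g n ω)‖ ≤ ‖z k‖ * C := fun k n ω =>
    (z k).le_of_opNorm_le_of_le le_rfl (hC _ (hgV n ω))
  have hzi : ∀ k n, Integrable (fun ω => z k (g n ω)) ν := fun k n =>
    Integrable.of_bound (hzm k n) _ (Eventually.of_forall (hzC k n))
  choose η hηm hηi hη using fun k => exists_ultrafilter_limit_of_bound (hzm k)
    (mul_nonneg (norm_nonneg _) hC0) (hzC k) U
  have hsep : ∀ᵐ ω ∂ν, ∀ (T : Finset ℕ) (q : T → ℚ),
      ∑ i, (q i : ℝ) * η i ω ≤ sSup ((fun v => ∑ i, (q i : ℝ) * z i v) '' V) := by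
    refine ae_all_iff.2 fun T => ae_all_iff.2 fun q => ?_
    refine ae_le_of_forall_setIntegral_le
      (integrable_finsetSum _ fun i _ => (hηi i).const_mul _) (integrable_const _) fun B hB _ => ?_
    have hlim : Tendsto (fun n => ∫ ω in B, ∑ i : T, (q i : ℝ) * z i (g n ω) ∂ν) U
        (𝓝 (∫ ω in B, ∑ i : T, (q i : ℝ) * η i ω ∂ν)) := by
      have hsum : ∀ F : ℕ → S → ℝ, (∀ k, Integrable (F k) ν) →
          ∫ ω in B, ∑ i : T, (q i : ℝ) * F i ω ∂ν = ∑ i : T, (q i : ℝ) * ∫ ω in B, F i ω ∂ν := by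
        intro F hF
        rw [integral_finsetSum (f := fun (i : T) ω => (q i : ℝ) * F i ω) Finset.univ
          fun i _ => ((hF i).const_mul _).integrableOn]
        simp_rw [integral_const_mul]
      rw [hsum _ hηi]
      simp_rw [fun n => hsum (fun k ω => z k (g n ω)) fun k => hzi k n]
      exact tendsto_finsetSum _ fun i _ => (hη i B hB).const_mul _
    refine le_of_tendsto hlim (Eventually.of_forall fun n => ?_)
    refine integral_mono (integrable_finsetSum _ fun i _ => ((hzi i n).const_mul _).integrableOn)
      (integrable_const _) fun ω => ?_
    have hb := bddAbove_rat_combination hC (∑ i : T, (q i : ℝ) • z i)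
    refine le_csSup ?_ ⟨_, hgV n ω, rfl⟩
    simpa using hb
  have hG : ∀ ω, ∃ y ∈ V, (∀ (T : Finset ℕ) (q : T → ℚ),
      ∑ i, (q i : ℝ) * η i ω ≤ sSup ((fun v => ∑ i, (q i : ℝ) * z i v) '' V)) →
      ∀ i, z i y = η i ω := by
    intro ω
    by_cases h : ∀ (T : Finset ℕ) (q : T → ℚ),
      ∑ i, (q i : ℝ) * η i ω ≤ sSup ((fun v => ∑ i, (q i : ℝ) * z i v) '' V)
    · obtain ⟨y, hy, hyz⟩ := exists_mem_of_rat_separation hV hc hne z (fun i => η i ω) h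
      exact ⟨y, hy, fun _ => hyz⟩
    · exact ⟨_, hne.some_mem, fun h' => absurd h' h⟩
  choose G hGV hGη using hG
  have hGz : ∀ᵐ ω ∂ν, ∀ i, z i (G ω) = η i ω := by
    filter_upwards [hsep] with ω hω
    exact hGη ω hω
  refine ⟨G, ?_, hGV, fun k B hB => ?_⟩
  · borelize Y
    refine AEMeasurable.aestronglyMeasurable ?_
    rw [← (measurableEmbedding_functionals hz).aemeasurable_comp_iff]
    refine ⟨fun ω k => η k ω, measurable_pi_lambda _ hηm, ?_⟩
    filter_upwards [hGz] with ω hω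
    exact funext hω
  · convert hη k B hB using 2
    refine integral_congr_ae (ae_restrict_of_ae ?_)
    filter_upwards [hGz] with ω hω
    exact hω k

theorem tendsto_of_approx {ι : Type*} {l : Filter ι} {F : ι → ℝ} {f : ℝ}
    (h : ∀ ε : ℝ, 0 < ε → ∃ (A : ι → ℝ) (a : ℝ), Tendsto A l (𝓝 a) ∧ (∀ n, |F n - A n| ≤ ε) ∧
      |f - a| ≤ ε) : Tendsto F l (𝓝 f) := by
  refine Metric.tendsto_nhds.2 fun ε hε => ?_
  obtain ⟨A, a, hA, hFA, hfa⟩ := h (ε / 4) (by positivity)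
  filter_upwards [Metric.tendsto_nhds.1 hA (ε / 4) (by positivity)] with n hn
  rw [Real.dist_eq] at hn ⊢
  have h1 := abs_le.1 (hFA n)
  have h2 := abs_le.1 hfa
  have h3 := abs_lt.1 hn
  rw [abs_lt]
  constructor <;> linarith [h1.1, h1.2, h2.1, h2.2, h3.1, h3.2]

/-- Partition of the space into sets on which a measurable field of functionals is uniformly
close to a constant one. -/
theorem exists_partition_approx {S Y : Type*} [MeasurableSpace S] [NormedAddCommGroup Y]
    [NormedSpace ℝ Y] {V D : Set Y} {z : ℕ → StrongDual ℝ Y}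
    (hz : ∀ φ : StrongDual ℝ Y, ∀ ε : ℝ, 0 < ε → ∃ k, ∀ v ∈ V, |φ v - z k v| ≤ ε)
    (hD : D.Countable) (hDV : D ⊆ V)
    (hDd : ∀ φ : StrongDual ℝ Y, ∀ ε : ℝ, (∀ v ∈ D, |φ v| ≤ ε) → ∀ v ∈ V, |φ v| ≤ ε)
    {φ : S → StrongDual ℝ Y} (hφ : ∀ y, Measurable fun s => φ s y) {ε : ℝ} (hε : 0 < ε) :
    ∃ B : ℕ → Set S, (∀ i, MeasurableSet (B i)) ∧ Pairwise (Function.onFun Disjoint B) ∧ ⋃ i, B i = univ ∧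
      ∀ i, ∀ s ∈ B i, ∀ v ∈ V, |φ s v - z i v| ≤ ε := by
  let B : ℕ → Set S := fun i => {s | ∀ v ∈ D, |φ s v - z i v| ≤ ε}
  have hB : ∀ i, MeasurableSet (B i) := fun i => by
    have : B i = ⋂ v ∈ D, {s | |φ s v - z i v| ≤ ε} := by
      ext; simp [B]
    rw [this]
    exact MeasurableSet.biInter hD fun v _ =>
      measurableSet_le ((hφ v).sub_const _).abs measurable_const
  refine ⟨disjointed B, MeasurableSet.disjointed hB, disjoint_disjointed B, ?_, ?_⟩
  · rw [iUnion_disjointed]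
    refine eq_univ_of_forall fun s => ?_
    obtain ⟨k, hk⟩ := hz (φ s) ε hε
    exact mem_iUnion.2 ⟨k, fun v hv => hk v (hDV hv)⟩
  · intro i s hs v hv
    exact hDd (φ s - z i) ε (fun v hv => disjointed_subset B i hs v hv) v hv

/-- Error made when replacing a field of functionals by finitely many of them. -/
theorem abs_integral_eval_sub_sum_le {S Y : Type*} [MeasurableSpace S] {ν : Measure S}
    [IsProbabilityMeasure ν] [NormedAddCommGroup Y] [NormedSpace ℝ Y] [SecondCountableTopology Y]
    {V : Set Y} {C : ℝ} (hC0 : 0 ≤ C) (hC : ∀ v ∈ V, ‖v‖ ≤ C) {z : ℕ → StrongDual ℝ Y}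
    {φ : S → StrongDual ℝ Y} (hφ : ∀ y, Measurable fun s => φ s y) {M : ℝ} (hM : ∀ s, ‖φ s‖ ≤ M)
    {ε : ℝ} (hε : 0 ≤ ε) {B : ℕ → Set S} (hB : ∀ i, MeasurableSet (B i))
    (hBd : Pairwise (Function.onFun Disjoint B))
    (hBz : ∀ i, ∀ s ∈ B i, ∀ v ∈ V, |φ s v - z i v| ≤ ε) {N : ℕ}
    (hN : ν.real (⋃ i ∈ Finset.range N, B i)ᶜ ≤ ε) {h : S → Y} (hh : AEStronglyMeasurable h ν)
    (hhV : ∀ s, h s ∈ V) :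
    |∫ s, φ s (h s) ∂ν - ∑ i ∈ Finset.range N, ∫ s in B i, z i (h s) ∂ν| ≤ ε * (1 + M * C) := by
  have hM0 : 0 ≤ M := by
    obtain ⟨s⟩ := nonempty_of_isProbabilityMeasure ν
    exact (norm_nonneg _).trans (hM s)
  have hhi : Integrable h ν := Integrable.of_bound hh C (Eventually.of_forall fun s => hC _ (hhV s))
  have hi := integrable_eval hφ hM hhi
  have h1 := norm_integral_sub_setIntegral_le (μ := ν) (f := fun s => φ s (h s)) (C := M * C)
    (Eventually.of_forall fun s => (φ s).le_of_opNorm_le_of_le (hM s) (hC _ (hhV s)))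
    (Finset.measurableSet_biUnion (Finset.range N) fun i _ => hB i) hi
  rw [Real.norm_eq_abs, integral_biUnion_finset _ (fun i _ => hB i) (fun i _ j _ hij => hBd hij)
    fun i _ => hi.integrableOn] at h1
  have h2 : |∑ i ∈ Finset.range N, ∫ s in B i, φ s (h s) ∂ν -
      ∑ i ∈ Finset.range N, ∫ s in B i, z i (h s) ∂ν| ≤ ε := by
    rw [← Finset.sum_sub_distrib]
    have h3 : ∀ i ∈ Finset.range N, |∫ s in B i, φ s (h s) ∂ν - ∫ s in B i, z i (h s) ∂ν| ≤
        ε * ν.real (B i) := fun i _ => by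
      rw [← integral_sub hi.integrableOn ((z i).integrable_comp hhi).integrableOn]
      exact norm_setIntegral_le_of_norm_le_const (f := fun s => φ s (h s) - z i (h s))
        (measure_lt_top _ _) fun s hs => hBz i s hs _ (hhV s)
    refine (Finset.abs_sum_le_sum_abs _ _).trans ((Finset.sum_le_sum h3).trans ?_)
    rw [← Finset.mul_sum, ← measureReal_biUnion_finset (fun i _ j _ hij => hBd hij)
      fun i _ => hB i]
    exact mul_le_of_le_one_right hε measureReal_le_one
  have h4 : ν.real (⋃ i ∈ Finset.range N, B i)ᶜ * (M * C) ≤ ε * (M * C) := by gcongr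
  rw [abs_le] at h1 h2 ⊢
  constructor <;> linarith [h1.1, h1.2, h2.1, h2.2]

theorem exists_wtendsto_of_forall_mem {S Y : Type*} [MeasurableSpace S] {ν : Measure S}
    [IsProbabilityMeasure ν] [NormedAddCommGroup Y] [NormedSpace ℝ Y] [CompleteSpace Y]
    [SecondCountableTopology Y] {W : Set Y} (hW : IsWeaklyCompact W)
    {g : ℕ → S → Y} (hg : ∀ n, StronglyMeasurable (g n)) (hgi : ∀ n, Integrable (g n) ν)
    (hgW : ∀ n ω, g n ω ∈ W) (U : Ultrafilter ℕ) :
    ∃ G : Lp Y 1 ν, WTendsto (fun n => (hgi n).toL1 (g n)) U G := by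
  obtain ⟨V, hV, hVc, hWV⟩ := hW.exists_convex
  have hgV : ∀ n ω, g n ω ∈ V := fun n ω => hWV (hgW n ω)
  have hne : V.Nonempty := by
    obtain ⟨s⟩ := nonempty_of_isProbabilityMeasure ν
    exact ⟨_, hgV 0 s⟩
  obtain ⟨C, hC⟩ := (show IsRelWeaklyCompact V from IsCompact.closure hV).exists_norm_le
  have hC0 : 0 ≤ C := (norm_nonneg _).trans (hC _ hne.some_mem)
  obtain ⟨z, D, hzi, hzd, hD, hDV, hDd⟩ := hV.exists_dense_functionals
  obtain ⟨G, hG, hGV, hGz⟩ := exists_ultrafilter_selection (ν := ν) hV hVc hne hC hg hgV hzi U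
  have hGi : Integrable G ν :=
    Integrable.of_bound hG C (Eventually.of_forall fun s => hC _ (hGV s))
  refine ⟨hGi.toL1 G, fun Φ => ?_⟩
  obtain ⟨φ, hφM, hφ, hΦ⟩ := exists_representation ν Φ
  have hrep : ∀ (f : S → Y) (hf : Integrable f ν), Φ (hf.toL1 f) = ∫ s, φ s (f s) ∂ν := by
    intro f hf
    rw [hΦ]
    refine integral_congr_ae ?_
    filter_upwards [hf.coeFn_toL1] with s hs
    rw [hs]
  simp only [hrep]
  refine tendsto_of_approx fun ε hε => ?_
  have hpos : 0 < 1 + ‖Φ‖ * C := by positivity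
  have hε' : 0 < ε / (1 + ‖Φ‖ * C) := by positivity
  obtain ⟨B, hB, hBd, hBU, hBz⟩ := exists_partition_approx hzd hD hDV hDd hφ hε'
  obtain ⟨N, hN⟩ := exists_measure_iUnion_diff_lt (ν := ν) hB (ENNReal.ofReal_pos.2 hε')
  rw [hBU, ← compl_eq_univ_sdiff] at hN
  have hN' : ν.real (⋃ i ∈ Finset.range N, B i)ᶜ ≤ ε / (1 + ‖Φ‖ * C) :=
    ENNReal.toReal_le_of_le_ofReal hε'.le hN.le
  have hmul : ε / (1 + ‖Φ‖ * C) * (1 + ‖Φ‖ * C) = ε := div_mul_cancel₀ _ hpos.ne'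
  refine ⟨fun n => ∑ i ∈ Finset.range N, ∫ s in B i, z i (g n s) ∂ν, _,
    tendsto_finsetSum _ fun i _ => hGz i (B i) (hB i), fun n => ?_, ?_⟩
  · have := abs_integral_eval_sub_sum_le hC0 hC hφ hφM hε'.le hB hBd hBz hN'
      (hg n).aestronglyMeasurable (hgV n)
    rwa [hmul] at this
  · have := abs_integral_eval_sub_sum_le hC0 hC hφ hφM hε'.le hB hBd hBz hN' hG hGV
    rwa [hmul] at this

theorem WTendsto.norm_le {ι E : Type*} [NormedAddCommGroup E] [NormedSpace ℝ E] {u : ι → E}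
    {l : Filter ι} [l.NeBot] {x : E} (h : WTendsto u l x) {C : ℝ} (hC : ∀ i, ‖u i‖ ≤ C) :
    ‖x‖ ≤ C := by
  obtain ⟨φ, hφ, hx⟩ := exists_dual_vector'' ℝ x
  have h1 : φ x ≤ C := le_of_tendsto (h φ) (Eventually.of_forall fun i =>
    (le_abs_self _).trans ((φ.le_of_opNorm_le hφ _).trans (by rw [one_mul]; exact hC i)))
  rwa [hx] at h1

theorem WTendsto.sub {ι E : Type*} [NormedAddCommGroup E] [NormedSpace ℝ E] {u v : ι → E}
    {l : Filter ι} {x y : E} (hu : WTendsto u l x) (hv : WTendsto v l y) :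
    WTendsto (fun i => u i - v i) l (x - y) := by
  intro φ
  simp only [map_sub]
  exact (hu φ).sub (hv φ)

/-- A sequence uniformly approximable by weakly convergent ones is weakly convergent. -/
theorem exists_wtendsto_of_approx {ι E : Type*} [NormedAddCommGroup E] [NormedSpace ℝ E]
    [CompleteSpace E] {u : ι → E} {l : Filter ι} [l.NeBot]
    (h : ∀ ε : ℝ, 0 < ε → ∃ (v : ι → E) (x : E), WTendsto v l x ∧ ∀ i, ‖u i - v i‖ ≤ ε) :
    ∃ x, WTendsto u l x := by
  choose v y hvy huv using fun n : ℕ => h (1 / (n + 1)) Nat.one_div_pos_of_nat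
  have hdist : ∀ m n, ‖y m - y n‖ ≤ 1 / (m + 1) + 1 / (n + 1) := fun m n =>
    ((hvy m).sub (hvy n)).norm_le fun i => by
      have : v m i - v n i = (u i - v n i) - (u i - v m i) := by abel
      rw [this]
      refine (norm_sub_le _ _).trans ?_
      rw [add_comm]
      exact add_le_add (huv m i) (huv n i)
  have hlim : Tendsto (fun n : ℕ => 1 / ((n : ℝ) + 1)) atTop (𝓝 0) :=
    tendsto_one_div_add_atTop_nhds_zero_nat
  have hcau : CauchySeq y := by
    refine cauchySeq_of_le_tendsto_0 (fun n : ℕ => 1 / ((n : ℝ) + 1) + 1 / ((n : ℝ) + 1))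
      (fun m n N hm hn => ?_) (by simpa using hlim.add hlim)
    rw [dist_eq_norm]
    refine (hdist m n).trans (add_le_add ?_ ?_)
    · exact Nat.one_div_le_one_div hm
    · exact Nat.one_div_le_one_div hn
  obtain ⟨x, hx⟩ := cauchySeq_tendsto_of_complete hcau
  have hyx : ∀ m, ‖x - y m‖ ≤ 1 / (m + 1) := fun m => by
    have h1 : Tendsto (fun n => ‖y n - y m‖) atTop (𝓝 ‖x - y m‖) := (hx.sub_const _).norm
    have h2 : Tendsto (fun n : ℕ => 1 / ((n : ℝ) + 1) + 1 / ((m : ℝ) + 1)) atTop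
        (𝓝 (0 + 1 / ((m : ℝ) + 1))) := hlim.add_const _
    rw [zero_add] at h2
    exact le_of_tendsto_of_tendsto' h1 h2 fun n => hdist n m
  refine ⟨x, fun φ => tendsto_of_approx fun ε hε => ?_⟩
  have h3 : Tendsto (fun n : ℕ => ‖φ‖ * (1 / ((n : ℝ) + 1))) atTop (𝓝 (‖φ‖ * 0)) :=
    hlim.const_mul _
  rw [mul_zero] at h3
  obtain ⟨n, hn⟩ := (h3.eventually (gt_mem_nhds hε)).exists
  refine ⟨fun i => φ (v n i), φ (y n), hvy n φ, fun i => ?_, ?_⟩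
  · rw [← map_sub]
    exact (φ.le_of_opNorm_le_of_le le_rfl (huv n i)).trans hn.le
  · rw [← map_sub]
    exact (φ.le_of_opNorm_le_of_le le_rfl (hyx n)).trans hn.le

theorem IsWeaklyCompact.exists_subspace {E : Type*} [NormedAddCommGroup E] [NormedSpace ℝ E]
    {W : Set E} (hW : IsWeaklyCompact W) {M : Submodule ℝ E} (hM : IsClosed (M : Set E)) :
    ∃ V : Set M, IsWeaklyCompact V ∧ ∀ m : M, (m : E) ∈ W → m ∈ V := by
  have hWr : IsRelWeaklyCompact W := IsCompact.closure hW
  have h : IsRelWeaklyCompact ((Subtype.val : M → E) ⁻¹' W) := by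
    refine isRelWeaklyCompact_of_seq ?_ fun a ha => ?_
    · obtain ⟨C, hC⟩ := hWr.exists_norm_le
      exact ⟨C, fun x hx => hC _ hx⟩
    · obtain ⟨x, ψ, hψ, hx⟩ := hWr.exists_subseq (fun n => (a n : E)) ha
      have hxM := hx.mem_of_closed M hM fun i => (a (ψ i)).2
      refine ⟨⟨x, hxM⟩, Filter.map ψ atTop, inferInstance, hψ.tendsto_atTop, ?_⟩
      exact WTendsto.subspace (u := a) fun φ => tendsto_map'_iff.2 (hx φ)
  obtain ⟨V, hV, hVm⟩ := h.exists_isWeaklyCompact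
  exact ⟨V, hV, fun m hm => hVm hm⟩

theorem exists_wtendsto_of_mem_isWeaklyCompact {S E : Type*} [MeasurableSpace S] {ν : Measure S}
    [IsProbabilityMeasure ν] [NormedAddCommGroup E] [NormedSpace ℝ E] [CompleteSpace E]
    {W : Set E} (hW : IsWeaklyCompact W) {g : ℕ → S → E} (hg : ∀ n, StronglyMeasurable (g n))
    (hgi : ∀ n, Integrable (g n) ν) (hgW : ∀ n ω, g n ω ∈ W) (U : Ultrafilter ℕ) :
    ∃ G : Lp E 1 ν, WTendsto (fun n => (hgi n).toL1 (g n)) U G := by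
  obtain ⟨M, hMc, hM2, hgM⟩ := exists_separable_submodule hg
  have : CompleteSpace M := hMc.completeSpace_coe
  obtain ⟨V, hV, hWV⟩ := hW.exists_subspace hMc
  borelize E
  let k : ℕ → S → M := fun n ω => ⟨g n ω, hgM n ω⟩
  have hk : ∀ n, StronglyMeasurable (k n) := fun n =>
    ((hg n).measurable.subtype_mk : Measurable (k n)).stronglyMeasurable
  have hki : ∀ n, Integrable (k n) ν := fun n =>
    (hgi n).norm.mono' (hk n).aestronglyMeasurable (Eventually.of_forall fun ω => le_rfl)
  obtain ⟨G, hG⟩ := exists_wtendsto_of_forall_mem hV hk hki (fun n ω => hWV _ (hgW n ω)) U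
  refine ⟨ContinuousLinearMap.compLpL 1 ν M.subtypeL G, ?_⟩
  have h1 := hG.map (ContinuousLinearMap.compLpL 1 ν M.subtypeL)
  convert h1 using 2 with n
  refine Lp.ext ?_
  filter_upwards [(hgi n).coeFn_toL1, (hki n).coeFn_toL1,
    ContinuousLinearMap.coeFn_compLpL (p := 1) M.subtypeL ((hki n).toL1 (k n))] with ω h1 h2 h3
  rw [h1, h3, h2]
  rfl

/-- A bounded tight sequence has weak limits along ultrafilters. -/
theorem exists_wtendsto_of_tight {S E : Type*} [MeasurableSpace S] {ν : Measure S}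
    [IsProbabilityMeasure ν] [NormedAddCommGroup E] [NormedSpace ℝ E] [CompleteSpace E]
    {g : ℕ → S → E} (hg : ∀ n, StronglyMeasurable (g n))
    (hgi : ∀ n, Integrable (g n) ν) {C : ℝ} (hC0 : 0 ≤ C) (hC : ∀ n ω, ‖g n ω‖ ≤ C)
    (ht : ∀ δ : ℝ, 0 < δ → ∃ W : Set E, IsWeaklyCompact W ∧
      ∀ n, ν {ω | g n ω ∉ W} ≤ ENNReal.ofReal δ) (U : Ultrafilter ℕ) :
    ∃ G : Lp E 1 ν, WTendsto (fun n => (hgi n).toL1 (g n)) U G := by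
  refine exists_wtendsto_of_approx fun ε hε => ?_
  obtain ⟨W, hW, hWn⟩ := ht (ε / (1 + C)) (by positivity)
  borelize E
  have hWm : ∀ n, MeasurableSet {ω | g n ω ∈ W} := fun n =>
    (hg n).measurable hW.isClosed.measurableSet
  have hki : ∀ n, Integrable ({ω | g n ω ∈ W}.indicator (g n)) ν := fun n =>
    (hgi n).indicator (hWm n)
  obtain ⟨G, hG⟩ := exists_wtendsto_of_mem_isWeaklyCompact (ν := ν)
    (hW.union (isWeaklyCompact_singleton 0)) (fun n => (hg n).indicator (hWm n)) hki
    (fun n ω => by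
      by_cases h : ω ∈ {ω | g n ω ∈ W}
      · rw [indicator_of_mem h]
        exact Or.inl h
      · rw [indicator_of_notMem h]
        exact Or.inr rfl) U
  refine ⟨_, G, hG, fun n => ?_⟩
  rw [← Integrable.toL1_sub, L1.norm_eq_integral_norm]
  have h1 : ∫ ω, ‖((hgi n).sub (hki n)).toL1 _ ω‖ ∂ν =
      ∫ ω in {ω | g n ω ∉ W}, ‖g n ω‖ ∂ν := by
    have hWc : MeasurableSet {ω | g n ω ∉ W} := (hWm n).compl
    rw [← integral_indicator hWc]
    refine integral_congr_ae ?_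
    filter_upwards [((hgi n).sub (hki n)).coeFn_toL1] with ω hω
    rw [hω, Pi.sub_apply]
    by_cases h : ω ∈ {ω | g n ω ∈ W}
    · rw [indicator_of_mem h, sub_self, norm_zero, indicator_of_notMem]
      exact fun h' => h' h
    · rw [indicator_of_notMem h, sub_zero, indicator_of_mem (by exact h)]
  rw [h1]
  have h2 : ν.real {ω | g n ω ∉ W} ≤ ε / (1 + C) :=
    ENNReal.toReal_le_of_le_ofReal (by positivity) (hWn n)
  have h3 := norm_setIntegral_le_of_norm_le_const (f := fun ω => ‖g n ω‖) (C := C)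
    (measure_lt_top ν {ω | g n ω ∉ W}) fun ω _ => by
      rw [norm_norm]
      exact hC n ω
  refine (le_abs_self _).trans (h3.trans ?_)
  calc C * ν.real {ω | g n ω ∉ W} ≤ (1 + C) * (ε / (1 + C)) := by gcongr; linarith
    _ = ε := mul_div_cancel₀ _ (by positivity)

theorem integrable_ballTrunc {S E : Type*} [MeasurableSpace S] {ν : Measure S}
    [IsProbabilityMeasure ν] [NormedAddCommGroup E] {C : ℝ} (hC : 0 ≤ C) (f : Lp E 1 ν) :
    Integrable (fun ω => ballTrunc C (f ω)) ν :=
  Integrable.of_bound ((Lp.stronglyMeasurable f).ballTrunc C).aestronglyMeasurable C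
    (Eventually.of_forall fun _ => norm_ballTrunc_le hC _)

/-- The truncations of the elements of a relatively weakly compact set form a relatively weakly
compact set, if every bounded relatively weakly compact set is a δS-set. -/
theorem IsRelWeaklyCompact.range_ballTrunc {S E : Type*} [MeasurableSpace S]
    [NormedAddCommGroup E] [NormedSpace ℝ E] [CompleteSpace E] {ν : Measure S}
    [IsProbabilityMeasure ν]
    (H : ∀ K : Set (Lp E 1 ν), (∃ C : ℝ, ∀ f ∈ K, ∀ᵐ ω ∂ν, ‖f ω‖ ≤ C) →
      IsRelWeaklyCompact K → IsDeltaSSet ν K)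
    {K : Set (Lp E 1 ν)} (hK : IsRelWeaklyCompact K) {C : ℝ} (hC : 0 ≤ C) :
    IsRelWeaklyCompact ((fun f => (integrable_ballTrunc hC f).toL1 _) '' K) := by
  refine isRelWeaklyCompact_of_seq ⟨C, ?_⟩ fun a ha => ?_
  · rintro _ ⟨f, -, rfl⟩
    rw [L1.norm_eq_integral_norm]
    have h1 := norm_integral_le_of_norm_le_const (μ := ν) (C := C)
      (f := fun ω => ‖(integrable_ballTrunc hC f).toL1 _ ω‖) (by
        filter_upwards [(integrable_ballTrunc hC f).coeFn_toL1] with ω hω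
        rw [hω, norm_norm]
        exact norm_ballTrunc_le hC _)
    rw [probReal_univ, mul_one] at h1
    exact (le_abs_self _).trans h1
  · choose f hfK hfa using ha
    obtain ⟨x, ψ, hψ, hx⟩ := hK.exists_subseq f hfK
    obtain ⟨G, hG⟩ := exists_wtendsto_of_tight
      (fun n => (Lp.stronglyMeasurable (f (ψ n))).ballTrunc C)
      (fun n => integrable_ballTrunc hC (f (ψ n))) hC (fun n ω => norm_ballTrunc_le hC _)
      (fun δ hδ => exists_tight H hx hC hδ) (hyperfilter ℕ)
    refine ⟨G, Filter.map ψ (hyperfilter ℕ : Filter ℕ), inferInstance,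
      (Filter.map_mono Nat.hyperfilter_le_atTop).trans hψ.tendsto_atTop, fun φ => ?_⟩
    rw [tendsto_map'_iff]
    refine (hG φ).congr fun n => ?_
    rw [Function.comp_apply, ← hfa]

theorem exists_measure_lt_norm_le {S E : Type*} [MeasurableSpace S] {ν : Measure S}
    [NormedAddCommGroup E] {B : ℝ} {δ : ℝ} (hδ : 0 < δ) :
    ∃ C : ℝ, 0 ≤ C ∧ ∀ f : Lp E 1 ν, ‖f‖ ≤ B → ν {ω | C < ‖f ω‖} ≤ ENNReal.ofReal δ := by
  refine ⟨(|B| + 1) / δ, by positivity, fun f hf => ?_⟩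
  have hC : 0 < (|B| + 1) / δ := by positivity
  have h1 := mul_meas_ge_le_lintegral₀ (μ := ν) (f := fun ω => ‖f ω‖ₑ)
    (Lp.stronglyMeasurable f).enorm.aemeasurable (ENNReal.ofReal ((|B| + 1) / δ))
  have h2 : ∫⁻ ω, ‖f ω‖ₑ ∂ν ≤ ENNReal.ofReal (|B| + 1) := by
    rw [← eLpNorm_one_eq_lintegral_enorm, ← Lp.enorm_def, ← ofReal_norm]
    exact ENNReal.ofReal_le_ofReal (by linarith [le_abs_self B])
  have h3 : ENNReal.ofReal (|B| + 1) =
      ENNReal.ofReal ((|B| + 1) / δ) * ENNReal.ofReal δ := by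
    rw [← ENNReal.ofReal_mul hC.le, div_mul_cancel₀ _ hδ.ne']
  have h4 := (ENNReal.mul_le_mul_iff_right (ENNReal.ofReal_pos.2 hC).ne' ENNReal.ofReal_ne_top).1
    ((h1.trans h2).trans_eq h3)
  refine (measure_mono fun ω hω => ?_).trans h4
  change ENNReal.ofReal _ ≤ ‖f ω‖ₑ
  rw [← ofReal_norm]
  exact ENNReal.ofReal_le_ofReal (le_of_lt hω)

/-- `X` has property (δSμ) iff every uniformly bounded relatively weakly compact subset of
`L¹(μ,X)` is a δS-set. -/
theorem deltaSProp_iff_uniformlyBounded (μ : Measure Ω) [IsProbabilityMeasure μ]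
    [CompleteSpace X] :
    DeltaSProp μ X ↔ ∀ K : Set (Lp X 1 μ),
      (∃ C : ℝ, ∀ f ∈ K, ∀ᵐ ω ∂μ, ‖(f : Ω → X) ω‖ ≤ C) →
      IsRelWeaklyCompact K → IsDeltaSSet μ K := by
  refine ⟨fun h K _ hK => h K hK, fun H K hK => ⟨hK.unifIntegrableSet, fun δ hδ => ?_⟩⟩
  obtain ⟨B, hB⟩ := hK.exists_norm_le
  obtain ⟨C, hC, hCB⟩ := exists_measure_lt_norm_le (E := X) (ν := μ) (B := B) (half_pos hδ)
  obtain ⟨-, hS⟩ := H _ ⟨C, by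
    rintro _ ⟨f, -, rfl⟩
    filter_upwards [(integrable_ballTrunc hC f).coeFn_toL1] with ω hω
    rw [hω]
    exact norm_ballTrunc_le hC _⟩ (hK.range_ballTrunc H hC)
  obtain ⟨W, hW, hWm⟩ := hS _ (half_pos hδ)
  borelize X
  refine ⟨W, hW, fun f hf => one_sub_le_of_measure_compl_le ?_⟩
  have h1 := measure_compl_le_of_one_sub_le
    ((Lp.stronglyMeasurable _).measurable hW.isClosed.measurableSet)
    (hWm _ (mem_image_of_mem _ hf))
  rw [← add_halves δ, ENNReal.ofReal_add (half_pos hδ).le (half_pos hδ).le]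
  refine le_trans (le_trans (measure_mono_ae ?_) (measure_union_le _ _))
    (add_le_add h1 (hCB f (hB f hf)))
  filter_upwards [(integrable_ballTrunc hC f).coeFn_toL1] with ω hω hfW
  by_cases h : C < ‖f ω‖
  · exact Or.inr h
  · refine Or.inl fun h' => hfW ?_
    have h2 : (integrable_ballTrunc hC f).toL1 _ ω ∈ W := h'
    rwa [hω, ballTrunc_of_le (not_lt.1 h)] at h2
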